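/- arXiv:1610.05979 — 3 statements merged into one kernel-verified Lean document; each statement's English description precedes it below -/
import Mathlib

section
/- Let d ≥ 2 and let v ∈ {0,1}^d with 1 < ℓ = |v| < d and support I ⊆ {1,…,d}. Choose i_1 ∈ I and i_2 ∉ I, and set I_1 = I∖{i_1} and I_2 = ({1,…,d}∖I)∖{i_2}. Let w_1,…,w_m ∈ {0,1}^d have support contained in I_1 and let α_1 = C_{w_1}^{a_1}⋯C_{w_m}^{a_m} with a_j ≥ 1 and a_1+…+a_m = ℓ. Let z_1,…,z_t ∈ {0,1}^d each have support containing I∪{i_2}, and let α_2 = C_{z_1}^{b_1}⋯C_{z_t}^{b_t} with b_j ≥ 1 and b_1+…+b_t = d−ℓ. Then deg(α_1 · C_v · α_2) = deg(α_1|_{I_1}) · deg(α_2|_{I_2}), where α_1|_{I_1} is the degree-ℓ element of Chow(□^{ℓ−1}) obtained by restricting each w_j to the coordinates in I_1 (keeping the exponents a_j), and α_2|_{I_2} is the degree-(d−ℓ) element of Chow(□^{d−ℓ−1}) obtained by restricting each z_j to the coordinates in I_2 (keeping the exponents b_j). -/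
/-!
The theorem rests on two facts about `Z(□^ι) = ℤ[C_v]`.

*A degree functional.* There is an explicit linear map `degMap : Z(□^ι) → ℤ` which vanishes on
`I_rat` (`degMap_eq_zero`) and equals `1` on the product over any maximal chain (`degMap_chain`).
It is supported on monomials `∏ C_{u_j}^{e_j}` of degree `card ι + 1` whose points form a chain
`u_0 < … < u_k` with all `e_j ≥ 1`; with `E_j = e_0 + … + e_{j-1}` the value of such a monomial is
`∏_j (-1)^{e_j-1} binom(e_j-1, |u_j|-E_j) binom(|u_j|-|u_{j-1}|-1, |u_j|-E_j)`, where a factor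
with `|u_j| < E_j` is zero and the last binomial is `1` for `j = 0`. (The sign and the first
binomial reflect the expansion of a power of a self-intersection class of the form `-(ψ + ψ')`,
the second binomial the geometry of a gap of the chain.) The relations (R1) hold because only
chains contribute. For (R2) and (R3) one multiplies a monomial by `∑ C_v`, the sum running over
all `v` or over those with `v_i = 0`. If `v` falls strictly inside a gap of the chain, only `|v| =
E` contributes, so such terms are counted by a binomial coefficient, and Pascal's rule makes the
sum telescope from the top of the chain downwards: the terms inserted strictly above a given point
add up to the coefficient of the upper part of the chain with `E` shifted by one
(`sum_ins_above`). At the bottom everything cancels (`sum_ins`). The remaining case `v_i = 1` of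
(R3) is the difference of the two.

*Descent.* For `J = I_1`, extension by zero identifies `□^J` with the points below `v` which
vanish at `i_1`; for `J = I_2`, extension by one identifies `□^J` with the points above `v` which
are `1` at `i_2`. In both cases a relation of `□^J`, multiplied by `C_v`, becomes a relation of
`□^d`: apply the relations of `□^d`, using (R3) for the pair `u, v` and the coordinate `i_1`
(resp. `i_2`) in place of (R2), and discard the points not comparable with `v`
(`rename_extend_mul_mem`).

Now let `G_1`, `G_2` be the extended maximal chain products of `□^{I_1}` and `□^{I_2}`. By descent
`α_1 C_v α_2 ≡ n_1 G_1 C_v α_2 ≡ n_1 n_2 G_1 C_v G_2`, and `G_1 C_v G_2` is the product over a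
maximal chain of `{0,1}^d`. Applying `degMap` gives the claim.
-/

open MvPolynomial

namespace ChowCube

/-- The vertices of the hypercube `□^ι = {0,1}^ι`. -/
abbrev Cube (ι : Type) : Type := ι → Fin 2

variable (ι : Type) [Fintype ι] [DecidableEq ι]

/-- The ideal `I_rat(□^ι)` of elements rationally equivalent to zero, generated by
(R1) products over lists of points which are not pairwise comparable,
(R2) `C_u · (Σ_v C_v)`, and (R3) `C_u C_w · (Σ_{v : v_i = u_i} C_v)` for `u_i ≠ w_i`. -/
noncomputable def Irat : Ideal (MvPolynomial (Cube ι) ℤ) :=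
  Ideal.span
    ({ p | ∃ l : List (Cube ι),
        ¬ (l.Pairwise fun u v => u ≤ v ∨ v ≤ u) ∧ p = (l.map X).prod } ∪
     { p | ∃ u : Cube ι, p = X u * ∑ v : Cube ι, X v } ∪
     { p | ∃ u w : Cube ι, ∃ i : ι, u i ≠ w i ∧
         p = X u * X w * ∑ v ∈ Finset.univ.filter (fun v : Cube ι => v i = u i), X v })

/-- The Chow ring of the hypercube, `Chow(□^ι) = Z(□^ι)/I_rat`. -/
abbrev Chow : Type := MvPolynomial (Cube ι) ℤ ⧸ Irat ι

noncomputable def mk : MvPolynomial (Cube ι) ℤ →ₐ[ℤ] Chow ι :=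
  Ideal.Quotient.mkₐ ℤ (Irat ι)

/-- The degree `n` graded piece `Chow^n(□^ι)`. -/
noncomputable def piece (n : ℕ) : Submodule ℤ (Chow ι) :=
  Submodule.map (mk ι).toLinearMap (homogeneousSubmodule (Cube ι) ℤ n)

/-- The number of coordinates equal to `1`. -/
def wt (u : Cube ι) : ℕ := (Finset.univ.filter fun i => u i = 1).card

/-- The `j`-th vertex of the standard maximal chain in `{0,1}^ι`: the indicator
function of the set of the `j` smallest indices. -/
def chainVtx [LinearOrder ι] (j : ℕ) : Cube ι :=
  fun i => if (Finset.univ.filter fun i' => i' < i).card < j then 1 else 0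

/-- The monomial `C_{u_0}⋯C_{u_card ι}` of the standard maximal chain;
its class generates the top graded piece, and the degree map `deg` is the isomorphism
`Chow^{card ι + 1}(□^ι) ≅ ℤ` sending this class to `1`. -/
noncomputable def genMono [LinearOrder ι] : MvPolynomial (Cube ι) ℤ :=
  ∏ j ∈ Finset.range (Fintype.card ι + 1), X (chainVtx ι j)

end ChowCube
namespace ChowCube

/-- The support of a point of the hypercube. -/
def supp {ι : Type} [Fintype ι] [DecidableEq ι] (u : Cube ι) : Finset ι :=
  Finset.univ.filter fun i => u i = 1

/-- Restriction of a point of `{0,1}^d` to the coordinates in `J`. -/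
def restr {d : ℕ} (J : Finset (Fin d)) (u : Cube (Fin d)) : Cube ↥J :=
  fun i => u i

end ChowCube

namespace ChowCube

/-! ### Coefficients of chain monomials -/

section Degree

open scoped Classical

variable {ι : Type} [Fintype ι] [DecidableEq ι]

/-- The factor `(-1)^(e-1) binom(e-1, n-E)` contributed by a point of weight `n` with exponent
`e` when the points below it have total exponent `E`. The case `n < E`, where the subtraction
would truncate, is set to zero. Only the values for `e ≥ 1` are meaningful. -/
def vfac (e n E : ℕ) : ℤ :=
  if E ≤ n then (-1) ^ (e - 1) * ((e - 1).choose (n - E) : ℤ) else 0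

/-- The value of the degree functional on the part of a chain monomial carried by the list of
points, read upwards. The exponents are given by `e`; `p` is one more than the weight of the
point just below the list (`0` if there is none), and `E` is the total exponent of the points
below the list. -/
def chainCoeff (e : Cube ι →₀ ℕ) : List (Cube ι) → ℕ → ℕ → ℤ
  | [], _, _ => 1
  | u :: l, p, E =>
      vfac (e u) (wt ι u) E * ((wt ι u - p).choose (wt ι u - E) : ℤ) *
        chainCoeff e l (wt ι u + 1) (E + e u)

/-- Insertion of a point into an increasing list; nothing is inserted if the point is already
present. -/
noncomputable def ins (v : Cube ι) : List (Cube ι) → List (Cube ι)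
  | [] => [v]
  | u :: l => if v = u then u :: l else if v < u then v :: u :: l else u :: ins v l

/-- Pascal's rule, in the form in which raising an exponent enters the telescoping. -/
lemma vfac_succ {e : ℕ} (he : 1 ≤ e) (n E : ℕ) :
    vfac (e + 1) n E = -(vfac e n E + vfac e n (E + 1)) := by
  obtain ⟨k, rfl⟩ := Nat.exists_eq_add_of_le' he
  unfold vfac
  rcases lt_trichotomy E n with h | rfl | h
  · obtain ⟨r, rfl⟩ := Nat.exists_eq_add_of_lt h
    have h1 : E + r + 1 - E = r + 1 := by omega
    have h2 : E + r + 1 - (E + 1) = r := by omega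
    rw [if_pos (by omega), if_pos (by omega), if_pos (by omega), h1, h2]
    simp only [Nat.add_sub_cancel, Nat.choose_succ_succ]
    push_cast
    ring
  · simp [pow_succ]
  · rw [if_neg (by omega), if_neg (by omega), if_neg (by omega)]; simp

lemma vfac_one (n E : ℕ) : vfac 1 n E = if n = E then 1 else 0 := by
  unfold vfac
  rcases lt_trichotomy E n with h | rfl | h
  · rw [if_pos h.le, if_neg (by omega), Nat.choose_eq_zero_of_lt (by omega)]; simp
  · simp
  · rw [if_neg (by omega), if_neg (by omega)]

lemma vfac_eq_zero_of_le {e n E : ℕ} (he : 1 ≤ e) (h : E + e ≤ n) : vfac e n E = 0 := by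
  unfold vfac
  rw [if_pos (by omega), Nat.choose_eq_zero_of_lt (by omega)]; simp

lemma vfac_eq_zero_of_lt {e n E : ℕ} (h : n < E) : vfac e n E = 0 := by
  unfold vfac
  rw [if_neg (by omega)]

lemma chainCoeff_congr {e e' : Cube ι →₀ ℕ} {l : List (Cube ι)} (h : ∀ u ∈ l, e u = e' u)
    (p E : ℕ) : chainCoeff e l p E = chainCoeff e' l p E := by
  induction l generalizing p E with
  | nil => rfl
  | cons u l ih =>
    simp only [chainCoeff]
    rw [h u (by simp), ih fun x hx => h x (by simp [hx])]

lemma supp_subset_iff {u v : Cube ι} : supp u ⊆ supp v ↔ u ≤ v := by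
  simp only [supp, Finset.subset_iff, Finset.mem_filter, Finset.mem_univ, true_and, Pi.le_def]
  refine forall_congr' fun i => ?_
  generalize u i = a; generalize v i = b
  revert a b; decide

lemma supp_injective : Function.Injective (supp : Cube ι → Finset ι) := fun u v h =>
  le_antisymm (supp_subset_iff.1 h.le) (supp_subset_iff.1 h.ge)

lemma wt_mono {u v : Cube ι} (h : u ≤ v) : wt ι u ≤ wt ι v :=
  Finset.card_le_card (supp_subset_iff.2 h)

lemma wt_strict {u v : Cube ι} (h : u < v) : wt ι u < wt ι v :=
  Finset.card_lt_card
    ⟨supp_subset_iff.2 h.le, fun h' => h.not_ge (supp_subset_iff.1 h')⟩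

lemma wt_le (u : Cube ι) : wt ι u ≤ Fintype.card ι := Finset.card_le_univ _

/-- The indicator vector of a set of coordinates. -/
def indic (s : Finset ι) : Cube ι := fun i => if i ∈ s then 1 else 0

lemma supp_indic (s : Finset ι) : supp (indic s) = s := by
  ext i; simp [supp, indic]

/-- Points of weight `s` in `[a, b]` correspond to subsets of `supp b ∖ supp a` of size
`s - |a|`. -/
lemma card_interval {a b : Cube ι} (hab : a ≤ b) {s : ℕ} (hs : wt ι a ≤ s) :
    (Finset.univ.filter fun v : Cube ι => (a ≤ v ∧ v ≤ b) ∧ wt ι v = s).card =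
      (wt ι b - wt ι a).choose (s - wt ι a) := by
  have hab' := supp_subset_iff.2 hab
  have h1 : (supp b \ supp a).card = wt ι b - wt ι a := Finset.card_sdiff_of_subset hab'
  rw [← h1, ← Finset.card_powersetCard]
  refine Finset.card_nbij' (fun v => supp v \ supp a) (fun t => indic (t ∪ supp a)) ?_ ?_ ?_ ?_
  · intro v hv
    simp only [Finset.coe_filter, Finset.mem_univ, true_and, Set.mem_ofPred_eq] at hv
    obtain ⟨⟨h2, h3⟩, h4⟩ := hv
    simp only [Finset.mem_coe, Finset.mem_powersetCard]
    refine ⟨Finset.sdiff_subset_sdiff (supp_subset_iff.2 h3) le_rfl, ?_⟩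
    rw [Finset.card_sdiff_of_subset (supp_subset_iff.2 h2), ← h4]; rfl
  · intro t ht
    simp only [Finset.mem_coe, Finset.mem_powersetCard] at ht
    simp only [Finset.coe_filter, Finset.mem_univ, true_and, Set.mem_ofPred_eq,
      ← supp_subset_iff, supp_indic]
    refine ⟨⟨Finset.subset_union_right,
      Finset.union_subset (ht.1.trans Finset.sdiff_subset) hab'⟩, ?_⟩
    have : wt ι (indic (t ∪ supp a)) = (t ∪ supp a).card := by
      change (supp _).card = _
      rw [supp_indic]
    rw [this, Finset.card_union_of_disjoint
      (Finset.disjoint_of_subset_left ht.1 Finset.sdiff_disjoint), ht.2]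
    change s - wt ι a + wt ι a = s
    omega
  · intro v hv
    simp only [Finset.coe_filter, Finset.mem_univ, true_and, Set.mem_ofPred_eq] at hv
    apply supp_injective
    simp only [supp_indic]
    exact Finset.sdiff_union_of_subset (supp_subset_iff.2 hv.1.1)
  · intro t ht
    simp only [Finset.mem_coe, Finset.mem_powersetCard] at ht
    simp only [supp_indic]
    rw [Finset.union_sdiff_right, Finset.sdiff_eq_self_iff_disjoint]
    exact Finset.disjoint_of_subset_left ht.1 Finset.sdiff_disjoint

lemma card_open_interval {a b : Cube ι} (hab : a ≤ b) {s : ℕ} (hs : wt ι a < s)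
    (hs' : s < wt ι b) :
    (Finset.univ.filter fun v : Cube ι => (a < v ∧ v < b) ∧ wt ι v = s).card =
      (wt ι b - wt ι a).choose (wt ι b - s) := by
  rw [← Nat.choose_symm_of_eq_add (show wt ι b - wt ι a = (s - wt ι a) + (wt ι b - s) by
    omega), ← card_interval hab hs.le]
  congr 1
  ext v
  simp only [Finset.mem_filter, Finset.mem_univ, true_and]
  refine ⟨fun h => ⟨⟨h.1.1.le, h.1.2.le⟩, h.2⟩, fun h => ⟨⟨?_, ?_⟩, h.2⟩⟩
  · exact lt_of_le_of_ne h.1.1 (by rintro rfl; omega)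
  · exact lt_of_le_of_ne h.1.2 (by rintro rfl; omega)

lemma fin2_ne_one {x : Fin 2} : x ≠ 1 ↔ x = 0 := by revert x; decide
lemma fin2_ne_zero {x : Fin 2} : x ≠ 0 ↔ x = 1 := by revert x; decide

/-- Points of the open interval with `v i = 0` are those of an interval whose upper end is `b`
with the coordinate `i` set to zero, whence the loss of one in both entries of the binomial. -/
lemma card_open_interval_zero {a b : Cube ι} (hab : a ≤ b) {i : ι} (ha : a i = 0) (hb : b i = 1)
    {s : ℕ} (hs : wt ι a < s) (hs' : s < wt ι b) :
    (Finset.univ.filter fun v : Cube ι => (v i = 0 ∧ a < v ∧ v < b) ∧ wt ι v = s).card =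
      (wt ι b - (wt ι a + 1)).choose (wt ι b - (s + 1)) := by
  have hle : ∀ v : Cube ι, (v ≤ b ∧ v i = 0) ↔ v ≤ Function.update b i 0 := by
    intro v
    rw [le_update_iff]
    constructor
    · rintro ⟨h1, h2⟩
      exact ⟨h2.le, fun j _ => h1 j⟩
    · rintro ⟨h1, h2⟩
      have h3 : v i = 0 := by simpa using h1
      refine ⟨fun j => ?_, h3⟩
      by_cases hj : j = i
      · subst hj; rw [h3]; exact Fin.zero_le _
      · exact h2 j hj
  have hw : wt ι (Function.update b i 0) = wt ι b - 1 := by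
    have : supp (Function.update b i 0) = (supp b).erase i := by
      ext j
      by_cases hj : j = i
      · subst hj; simp [supp]
      · simp [supp, hj]
    change (supp _).card = _
    rw [this, Finset.card_erase_of_mem (by simp [supp, hb])]; rfl
  have hc := card_interval ((hle a).1 ⟨hab, ha⟩) hs.le
  rw [hw] at hc
  rw [← Nat.choose_symm_of_eq_add
    (show wt ι b - (wt ι a + 1) = (s - wt ι a) + (wt ι b - (s + 1)) by omega),
    show wt ι b - (wt ι a + 1) = wt ι b - 1 - wt ι a by omega, ← hc]
  congr 1
  ext v
  simp only [Finset.mem_filter, Finset.mem_univ, true_and, ← hle]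
  refine ⟨fun h => ⟨⟨h.1.2.1.le, h.1.2.2.le, h.1.1⟩, h.2⟩,
    fun h => ⟨⟨h.1.2.2, ?_, ?_⟩, h.2⟩⟩
  · exact lt_of_le_of_ne h.1.1 (by rintro rfl; omega)
  · exact lt_of_le_of_ne h.1.2.1 (by rintro rfl; omega)

/-- One step of the telescoping: the sum over the points `v` that can be inserted into the chain
`u :: l` splits into `v < u`, `v = u` and `v > u`. By `vfac_one`, a point `v < u` contributes only
if its weight is `E`. The predicate `Q` selects the summands of the relation, and `R` is the
condition of lying above the preceding point of the chain. -/
lemma sum_ins_cons (e : Cube ι →₀ ℕ) {u : Cube ι} {l : List (Cube ι)}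
    (hs : (u :: l).Pairwise (· < ·)) (he : 1 ≤ e u) (R Q : Cube ι → Prop)
    (hR : ∀ v, u ≤ v → R v) (hz : ∀ v, R v → v ∉ u :: l → e v = 0) (p E : ℕ) :
    (∑ v : Cube ι, if (Q v ∧ R v ∧ ∀ x ∈ u :: l, x ≤ v ∨ v ≤ x) then
      chainCoeff (e + Finsupp.single v 1) (ins v (u :: l)) p E else 0) =
    ((Finset.univ.filter fun v : Cube ι => (Q v ∧ R v ∧ v < u) ∧ wt ι v = E).card : ℤ) *
        (vfac (e u) (wt ι u) (E + 1) * chainCoeff e l (wt ι u + 1) (E + 1 + e u)) +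
      (if Q u then vfac (e u + 1) (wt ι u) E * ((wt ι u - p).choose (wt ι u - E) : ℤ) *
        chainCoeff e l (wt ι u + 1) (E + 1 + e u) else 0) +
      vfac (e u) (wt ι u) E * ((wt ι u - p).choose (wt ι u - E) : ℤ) *
      (∑ v : Cube ι, if (Q v ∧ u < v ∧ ∀ x ∈ l, x ≤ v ∨ v ≤ x) then
        chainCoeff (e + Finsupp.single v 1) (ins v l) (wt ι u + 1) (E + e u) else 0) := by
  have hs1 := List.pairwise_cons.1 hs
  have hnot : ∀ v, v ≤ u → v ∉ l := fun v hv hm => (hs1.1 v hm).not_ge hv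
  rw [Finset.card_filter, Nat.cast_sum, Finset.sum_mul, Finset.mul_sum]
  have hmid : (if Q u then vfac (e u + 1) (wt ι u) E * ((wt ι u - p).choose (wt ι u - E) : ℤ) *
        chainCoeff e l (wt ι u + 1) (E + 1 + e u) else 0) =
      ∑ v : Cube ι, if v = u then (if Q u then vfac (e u + 1) (wt ι u) E *
        ((wt ι u - p).choose (wt ι u - E) : ℤ) *
        chainCoeff e l (wt ι u + 1) (E + 1 + e u) else 0) else 0 := by simp
  rw [hmid, ← Finset.sum_add_distrib, ← Finset.sum_add_distrib]
  refine Finset.sum_congr rfl fun v _ => ?_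
  by_cases hQ : Q v
  swap
  · by_cases hvu : v = u
    · subst hvu; simp [hQ]
    · simp [hvu, hQ]
  by_cases hvu : v = u
  · subst hvu
    have hcomp : ∀ x ∈ v :: l, x ≤ v ∨ v ≤ x := by
      intro x hx
      right
      rcases List.mem_cons.1 hx with rfl | hx
      · exact le_rfl
      · exact (hs1.1 x hx).le
    rw [if_pos ⟨hQ, hR v le_rfl, hcomp⟩]
    · rw [if_neg (by simp), if_pos rfl, if_pos hQ, if_neg (by simp)]
      have h1 : chainCoeff (e + Finsupp.single v 1) l (wt ι v + 1) (E + (e v + 1)) =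
          chainCoeff e l (wt ι v + 1) (E + 1 + e v) := by
        rw [show E + (e v + 1) = E + 1 + e v by omega]
        refine chainCoeff_congr (fun x hx => ?_) _ _
        have : v ≠ x := by rintro rfl; exact hnot v le_rfl hx
        simp [this]
      simp [ins, chainCoeff, h1]
  by_cases hlt : v < u
  · rw [if_neg (c := v = u) hvu, if_neg (c := Q v ∧ u < v ∧ _) (fun h => lt_asymm hlt h.2.1)]
    by_cases hRv : R v
    · have hcomp : ∀ x ∈ u :: l, x ≤ v ∨ v ≤ x := by
        intro x hx
        right
        rcases List.mem_cons.1 hx with rfl | hx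
        · exact hlt.le
        · exact (hlt.trans (hs1.1 x hx)).le
      rw [if_pos ⟨hQ, hRv, hcomp⟩]
      · have hv0 : e v = 0 := hz v hRv (by simp [hvu, hnot v hlt.le])
        have hc : chainCoeff (e + Finsupp.single v 1) (u :: l) (wt ι v + 1) (E + 1) =
            chainCoeff e (u :: l) (wt ι v + 1) (E + 1) := by
          refine chainCoeff_congr (fun x hx => ?_) _ _
          have : v ≠ x := by
            rintro rfl
            rcases List.mem_cons.1 hx with h | h
            · exact hvu h
            · exact hnot v hlt.le h
          simp [this]
        rw [ins, if_neg hvu, if_pos hlt, chainCoeff]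
        simp only [Finsupp.add_apply, hv0, Finsupp.single_eq_same, zero_add]
        rw [hc, vfac_one]
        by_cases hw : wt ι v = E
        · rw [if_pos hw, if_pos ⟨⟨hQ, hRv, hlt⟩, hw⟩, chainCoeff, hw]
          simp
        · rw [if_neg hw, if_neg (by tauto)]
          simp
    · rw [if_neg (by tauto), if_neg (by tauto)]; simp
  · rw [if_neg (c := v = u) hvu, if_neg (c := (Q v ∧ R v ∧ v < u) ∧ _) (by tauto)]
    by_cases hgt : u < v
    · by_cases hl : ∀ x ∈ l, x ≤ v ∨ v ≤ x
      · have hcomp : ∀ x ∈ u :: l, x ≤ v ∨ v ≤ x := by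
          intro x hx
          rcases List.mem_cons.1 hx with rfl | hx
          · exact Or.inl hgt.le
          · exact hl x hx
        rw [if_pos ⟨hQ, hR v hgt.le, hcomp⟩, if_pos ⟨hQ, hgt, hl⟩]
        · rw [ins, if_neg hvu, if_neg hlt, chainCoeff]
          have : v ≠ u := hvu
          simp [this]
      · rw [if_neg (fun h => hl fun x hx => h.2.2 x (by simp [hx])), if_neg (by tauto)]
        simp
    · rw [if_neg (fun h => ?_), if_neg (by tauto)]
      · simp
      · rcases h.2.2 u (by simp) with h | h
        · exact hgt (lt_of_le_of_ne h (Ne.symm hvu))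
        · exact hlt (lt_of_le_of_ne h hvu)

/-! ### Telescoping -/

/-- Inserting a point strictly above `a`, in all possible ways, gives the coefficient of the part
of the chain above `a` with `E` raised by one. The hypothesis `|a| + 1 ≤ E` loses nothing in the
telescoping, since outside this range the factor of `a` vanishes (`vfac_eq_zero_of_le`). The sum runs over all points, or over those with `v i = 0`; in the second case some
point above `a` has `i`-th coordinate `1`. -/
lemma sum_ins_above (Q : Cube ι → Prop) (l : List (Cube ι)) :
    ∀ (a : Cube ι) (E : ℕ) (e : Cube ι →₀ ℕ), (a :: l).Pairwise (· < ·) →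
      (∀ u ∈ l, 1 ≤ e u) → (∀ v, a < v → v ∉ l → e v = 0) →
      wt ι a + 1 ≤ E → E + (l.map e).sum = Fintype.card ι → Q a →
      ((∀ v, Q v) ∨ ∃ i, (∀ v, Q v ↔ v i = 0) ∧ ∃ u ∈ l, u i = 1) →
      (∑ v : Cube ι, if (Q v ∧ a < v ∧ ∀ x ∈ l, x ≤ v ∨ v ≤ x) then
        chainCoeff (e + Finsupp.single v 1) (ins v l) (wt ι a + 1) E else 0) =
      chainCoeff e l (wt ι a + 1) (E + 1) := by
  induction l with
  | nil =>
    intro a E e hs he hz hp hE hQa hQ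
    rcases hQ with hQ | ⟨i, -, u, hu, -⟩
    swap
    · simp at hu
    have hE' : E = Fintype.card ι := by simpa using hE
    have htop : wt ι (fun _ => 1) = Fintype.card ι := by simp [wt]
    have hev : ∀ v, a < v → e v = 0 := fun v hv => hz v hv (by simp)
    have hwtop : ∀ v, wt ι v = Fintype.card ι → v = fun _ => 1 := by
      intro v hv
      apply supp_injective
      rw [(Finset.card_eq_iff_eq_univ (supp v)).1 hv, (Finset.card_eq_iff_eq_univ (supp _)).1 htop]
    have hatop : a < fun _ => 1 := by
      refine lt_of_le_of_ne (fun i => ?_) ?_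
      · exact Fin.le_last _
      · rintro h
        rw [← h] at htop
        omega
    rw [Finset.sum_eq_single (fun _ => 1)]
    · rw [if_pos ⟨hQ _, hatop, by simp⟩]
      simp [ins, chainCoeff, hev _ hatop, vfac_one, htop, hE']
    · intro v _ hv
      split_ifs with h
      · simp only [ins, chainCoeff, Finsupp.add_apply, hev _ h.2.1, Finsupp.single_eq_same,
          zero_add, vfac_one]
        rw [if_neg (fun h' => hv (hwtop v (h'.trans hE')))]
        simp
      · rfl
    · simp
  | cons u l ih =>
    intro a E e hs he hz hp hE hQa hQ
    have hs1 := List.pairwise_cons.1 hs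
    have hau : a < u := hs1.1 u (by simp)
    have heu : 1 ≤ e u := he u (by simp)
    have hwt := wt_strict hau
    rw [sum_ins_cons e hs1.2 heu (fun v => a < v) Q (fun v hv => hau.trans_le hv)
      (fun v hv h => hz v hv h)]
    by_cases hQu : Q u
    · have hQ' : (∀ v, Q v) ∨ ∃ i, (∀ v, Q v ↔ v i = 0) ∧ ∃ u ∈ l, u i = 1 := by
        rcases hQ with hQ | ⟨i, hi, x, hx, hxi⟩
        · exact Or.inl hQ
        · refine Or.inr ⟨i, hi, x, ?_, hxi⟩
          rcases List.mem_cons.1 hx with rfl | hx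
          · rw [(hi x).1 hQu] at hxi; exact absurd hxi (by decide)
          · exact hx
      have hQlt : ∀ v, v < u → Q v := by
        intro v hv
        rcases hQ with hQ | ⟨i, hi, -⟩
        · exact hQ v
        · rw [hi] at hQu ⊢
          have := hv.le i
          rw [hQu] at this
          exact le_antisymm this (Fin.zero_le _)
      -- if `E + e u ≤ |u|` the recursive term carries the factor zero
      have hrec : vfac (e u) (wt ι u) E *
          (∑ v : Cube ι, if (Q v ∧ u < v ∧ ∀ x ∈ l, x ≤ v ∨ v ≤ x) then
            chainCoeff (e + Finsupp.single v 1) (ins v l) (wt ι u + 1) (E + e u) else 0) =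
          vfac (e u) (wt ι u) E * chainCoeff e l (wt ι u + 1) (E + 1 + e u) := by
        by_cases hlt : wt ι u + 1 ≤ E + e u
        · rw [ih u (E + e u) e hs1.2 (fun x hx => he x (by simp [hx])) ?_ hlt ?_ hQu hQ',
            show E + e u + 1 = E + 1 + e u by omega]
          · intro v hv hvl
            refine hz v (hau.trans hv) ?_
            simp [hvl, hv.ne']
          · simp only [List.map_cons, List.sum_cons] at hE; omega
        · rw [vfac_eq_zero_of_le heu (by omega)]; simp
      rw [if_pos hQu, vfac_succ heu, mul_right_comm _ _ (Finset.sum _ _), hrec]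
      simp only [chainCoeff]
      by_cases hEu : E < wt ι u
      · have hcard : ((Finset.univ.filter fun v : Cube ι => (Q v ∧ a < v ∧ v < u) ∧
            wt ι v = E).card : ℤ) = ((wt ι u - (wt ι a + 1)).choose (wt ι u - E) : ℤ) +
              ((wt ι u - (wt ι a + 1)).choose (wt ι u - (E + 1)) : ℤ) := by
          have h1 := card_open_interval hau.le (s := E) (by omega) hEu
          have h2 : (Finset.univ.filter fun v : Cube ι => (Q v ∧ a < v ∧ v < u) ∧
            wt ι v = E) = (Finset.univ.filter fun v : Cube ι => (a < v ∧ v < u) ∧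
            wt ι v = E) := by
            ext v
            simp only [Finset.mem_filter, Finset.mem_univ, true_and]
            exact ⟨fun h => ⟨h.1.2, h.2⟩, fun h => ⟨⟨hQlt v h.1.2, h.1⟩, h.2⟩⟩
          rw [h2, h1]
          obtain ⟨g, hg⟩ := Nat.exists_eq_add_of_lt hwt
          obtain ⟨r, hr⟩ := Nat.exists_eq_add_of_lt hEu
          rw [show wt ι u - wt ι a = g + 1 by omega, show wt ι u - E = r + 1 by omega,
            show wt ι u - (wt ι a + 1) = g by omega, show wt ι u - (E + 1) = r by omega,
            Nat.choose_succ_succ]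
          push_cast; ring
        rw [hcard]
        ring
      · rw [vfac_eq_zero_of_lt (show wt ι u < E + 1 by omega)]
        ring
    · rcases hQ with hQ | ⟨i, hi, -⟩
      · exact absurd (hQ u) hQu
      have hui : u i = 1 := by rw [hi] at hQu; exact fin2_ne_zero.1 hQu
      have hrec : (∑ v : Cube ι, if (Q v ∧ u < v ∧ ∀ x ∈ l, x ≤ v ∨ v ≤ x) then
            chainCoeff (e + Finsupp.single v 1) (ins v l) (wt ι u + 1) (E + e u) else 0) = 0 := by
        refine Finset.sum_eq_zero fun v _ => if_neg ?_
        rintro ⟨h1, h2, -⟩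
        have h3 := h2.le i
        rw [(hi v).1 h1, hui] at h3
        exact absurd h3 (not_le_of_gt Fin.zero_lt_one)
      rw [hrec, if_neg hQu]
      simp only [chainCoeff]
      by_cases hEu : E < wt ι u
      · have h1 := card_open_interval_zero hau.le ((hi a).1 hQa) hui (s := E) (by omega) hEu
        simp only [hi]
        rw [h1]
        ring
      · rw [vfac_eq_zero_of_lt (show wt ι u < E + 1 by omega)]
        ring

/-- The sum over all insertions into a whole chain vanishes. Below the lowest point `u`, only the
zero vector has the required weight `0`, and its term cancels against those of `u` and of the
points above `u`. -/
lemma sum_ins (Q : Cube ι → Prop) {u : Cube ι} {l : List (Cube ι)} {e : Cube ι →₀ ℕ}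
    (hs : (u :: l).Pairwise (· < ·)) (he : ∀ x ∈ u :: l, 1 ≤ e x)
    (hz : ∀ v, v ∉ u :: l → e v = 0) (hE : ((u :: l).map e).sum = Fintype.card ι) (hQu : Q u)
    (hQ : (∀ v, Q v) ∨ ∃ i, (∀ v, Q v ↔ v i = 0) ∧ ∃ x ∈ u :: l, x i = 1) :
    (∑ v : Cube ι, if (Q v ∧ ∀ x ∈ u :: l, x ≤ v ∨ v ≤ x) then
      chainCoeff (e + Finsupp.single v 1) (ins v (u :: l)) 0 0 else 0) = 0 := by
  have heu : 1 ≤ e u := he u (by simp)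
  have hs' := sum_ins_cons e hs heu (fun _ => True) Q (fun _ _ => trivial)
    (fun v _ h => hz v h) 0 0
  simp only [true_and] at hs'
  rw [hs', if_pos hQu, vfac_succ heu]
  have hQ' : (∀ v, Q v) ∨ ∃ i, (∀ v, Q v ↔ v i = 0) ∧ ∃ u ∈ l, u i = 1 := by
    rcases hQ with hQ | ⟨i, hi, x, hx, hxi⟩
    · exact Or.inl hQ
    · refine Or.inr ⟨i, hi, x, ?_, hxi⟩
      rcases List.mem_cons.1 hx with rfl | hx
      · rw [(hi x).1 hQu] at hxi; exact absurd hxi (by decide)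
      · exact hx
  have hQlt : ∀ v, v < u → Q v := by
    intro v hv
    rcases hQ with hQ | ⟨i, hi, -⟩
    · exact hQ v
    · rw [hi] at hQu ⊢
      have := hv.le i
      rw [hQu] at this
      exact le_antisymm this (Fin.zero_le _)
  have hrec : vfac (e u) (wt ι u) 0 *
      (∑ v : Cube ι, if (Q v ∧ u < v ∧ ∀ x ∈ l, x ≤ v ∨ v ≤ x) then
        chainCoeff (e + Finsupp.single v 1) (ins v l) (wt ι u + 1) (0 + e u) else 0) =
      vfac (e u) (wt ι u) 0 * chainCoeff e l (wt ι u + 1) (0 + 1 + e u) := by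
    by_cases hlt : wt ι u + 1 ≤ 0 + e u
    · rw [sum_ins_above Q l u (0 + e u) e hs (fun x hx => he x (by simp [hx])) ?_ hlt ?_ hQu hQ',
        show 0 + e u + 1 = 0 + 1 + e u by omega]
      · intro v hv hvl
        refine hz v ?_
        simp [hvl, hv.ne']
      · simp only [List.map_cons, List.sum_cons] at hE; omega
    · rw [vfac_eq_zero_of_le heu (by omega)]; simp
  rw [mul_right_comm _ _ (Finset.sum _ _), hrec]
  by_cases hEu : 0 < wt ι u
  · have hcard : (Finset.univ.filter fun v : Cube ι => (Q v ∧ v < u) ∧ wt ι v = 0) =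
        {fun _ => 0} := by
      ext v
      simp only [Finset.mem_filter, Finset.mem_univ, true_and, Finset.mem_singleton]
      have h0 : wt ι (fun _ => 0) = 0 := by simp [wt]
      constructor
      · rintro ⟨-, h⟩
        apply supp_injective
        rw [Finset.card_eq_zero.1 (show (supp v).card = 0 from h),
          Finset.card_eq_zero.1 (show (supp _).card = 0 from h0)]
      · rintro rfl
        have : (fun _ => 0) < u := by
          refine lt_of_le_of_ne (fun i => Fin.zero_le _) ?_
          rintro rfl; omega
        exact ⟨⟨hQlt _ this, this⟩, h0⟩
    rw [hcard]
    simp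
    ring
  · rw [vfac_eq_zero_of_lt (show wt ι u < 0 + 1 by omega)]
    simp

/-! ### The degree functional -/

/-- The degree of the monomial with exponent vector `e`: zero unless the total degree is
`card ι + 1` and the support is a chain. The increasing list `l` enumerating the support is
unique (`sorted_unique`), so the choice does not matter. -/
noncomputable def degMono (e : Cube ι →₀ ℕ) : ℤ :=
  if h : e.degree = Fintype.card ι + 1 ∧
      ∃ l : List (Cube ι), l.Pairwise (· < ·) ∧ l.toFinset = e.support then
    chainCoeff e h.2.choose 0 0
  else 0

lemma sorted_unique {l l' : List (Cube ι)} (h : l.Pairwise (· < ·)) (h' : l'.Pairwise (· < ·))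
    (hll : l.toFinset = l'.toFinset) : l = l' := by
  refine List.Perm.eq_of_pairwise (le := (· < ·)) ?_ h h' ?_
  · intro a b _ _ h1 h2
    exact absurd h1 (lt_asymm h2)
  · refine (List.perm_ext_iff_of_nodup (h.imp ne_of_lt) (h'.imp ne_of_lt)).2 fun a => ?_
    rw [← List.mem_toFinset, hll, List.mem_toFinset]

lemma degMono_eq {e : Cube ι →₀ ℕ} (hd : e.degree = Fintype.card ι + 1) {l : List (Cube ι)}
    (hl : l.Pairwise (· < ·)) (hle : l.toFinset = e.support) :
    degMono e = chainCoeff e l 0 0 := by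
  have h : ∃ l : List (Cube ι), l.Pairwise (· < ·) ∧ l.toFinset = e.support := ⟨l, hl, hle⟩
  rw [degMono, dif_pos ⟨hd, h⟩]
  congr 1
  exact sorted_unique h.choose_spec.1 hl (h.choose_spec.2.trans hle.symm)

lemma sorted_comparable {l : List (Cube ι)} (h : l.Pairwise (· < ·)) {a b : Cube ι}
    (ha : a ∈ l) (hb : b ∈ l) : a ≤ b ∨ b ≤ a := by
  induction l with
  | nil => simp at ha
  | cons u l ih =>
    have h1 := List.pairwise_cons.1 h
    rcases List.mem_cons.1 ha with h2 | ha <;> rcases List.mem_cons.1 hb with h3 | hb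
    · exact Or.inl (h2.trans h3.symm).le
    · exact Or.inl (h2 ▸ h1.1 _ hb).le
    · exact Or.inr (h3 ▸ h1.1 _ ha).le
    · exact ih h1.2 ha hb

lemma degMono_eq_zero {e : Cube ι →₀ ℕ} {a b : Cube ι} (ha : e a ≠ 0) (hb : e b ≠ 0)
    (h : ¬ (a ≤ b ∨ b ≤ a)) : degMono e = 0 := by
  rw [degMono, dif_neg]
  rintro ⟨-, l, hl, hle⟩
  refine h (sorted_comparable hl ?_ ?_) <;> rw [← List.mem_toFinset, hle] <;> simpa

lemma mem_ins {v x : Cube ι} {l : List (Cube ι)} : x ∈ ins v l ↔ x = v ∨ x ∈ l := by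
  induction l with
  | nil => simp [ins]
  | cons u l ih =>
    rw [ins]
    split_ifs with h1 h2
    · subst h1; simp
    · simp
    · simp only [List.mem_cons, ih]; tauto

lemma ins_sorted {v : Cube ι} {l : List (Cube ι)} (hl : l.Pairwise (· < ·))
    (h : ∀ x ∈ l, x ≤ v ∨ v ≤ x) : (ins v l).Pairwise (· < ·) := by
  induction l with
  | nil => simp [ins]
  | cons u l ih =>
    have h1 := List.pairwise_cons.1 hl
    rw [ins]
    split_ifs with h2 h3
    · exact hl
    · refine List.pairwise_cons.2 ⟨fun x hx => ?_, hl⟩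
      rcases List.mem_cons.1 hx with rfl | hx
      · exact h3
      · exact h3.trans (h1.1 x hx)
    · refine List.pairwise_cons.2 ⟨fun x hx => ?_, ih h1.2 fun x hx => h x (by simp [hx])⟩
      rcases mem_ins.1 hx with rfl | hx
      · refine lt_of_le_of_ne ?_ (Ne.symm h2)
        rcases h u (by simp) with h4 | h4
        · exact h4
        · exact absurd (lt_of_le_of_ne h4 h2) h3
      · exact h1.1 x hx

lemma support_add_single (e : Cube ι →₀ ℕ) (v : Cube ι) :
    (e + Finsupp.single v 1).support = insert v e.support := by
  ext x
  by_cases hx : x = v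
  · subst hx; simp
  · simp [hx]

/-- The relations (R2) and (R3) on monomials: for a monomial containing `u` with `Q u`, the degrees
of its products with the `C_v` satisfying `Q v` add up to zero. Here `Q` is either always true, or
the condition `v i = 0` with the monomial containing a point whose `i`-th coordinate is `1`. -/
lemma sum_degMono (Q : Cube ι → Prop) (e : Cube ι →₀ ℕ) {u : Cube ι} (hu : e u ≠ 0) (hQu : Q u)
    (hQ : (∀ v, Q v) ∨ ∃ i, (∀ v, Q v ↔ v i = 0) ∧ ∃ x, e x ≠ 0 ∧ x i = 1) :
    (∑ v : Cube ι, if Q v then degMono (e + Finsupp.single v 1) else 0) = 0 := by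
  by_cases hd : e.degree = Fintype.card ι
  swap
  · refine Finset.sum_eq_zero fun v _ => ?_
    split_ifs
    · rw [degMono, dif_neg]
      rintro ⟨h, -⟩
      rw [map_add, Finsupp.degree_single] at h
      exact hd (by omega)
    · rfl
  by_cases hl : ∃ l : List (Cube ι), l.Pairwise (· < ·) ∧ l.toFinset = e.support
  swap
  · refine Finset.sum_eq_zero fun v _ => ?_
    split_ifs
    · rw [degMono, dif_neg]
      rintro ⟨-, l, h1, h2⟩
      refine hl ⟨l.filter (· ∈ e.support), h1.filter _, ?_⟩
      rw [List.toFinset_filter, h2, support_add_single]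
      ext x
      simp only [Finset.mem_filter, Finset.mem_insert, decide_eq_true_eq]
      tauto
    · rfl
  obtain ⟨l, hl, hle⟩ := hl
  have hmem : ∀ x, x ∈ l ↔ e x ≠ 0 := fun x => by
    rw [← List.mem_toFinset, hle, Finsupp.mem_support_iff]
  have hterm : ∀ v, (if Q v then degMono (e + Finsupp.single v 1) else 0) =
      if (Q v ∧ ∀ x ∈ l, x ≤ v ∨ v ≤ x) then
        chainCoeff (e + Finsupp.single v 1) (ins v l) 0 0 else 0 := by
    intro v
    by_cases hQv : Q v
    swap
    · rw [if_neg hQv, if_neg (by tauto)]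
    rw [if_pos hQv]
    by_cases hc : ∀ x ∈ l, x ≤ v ∨ v ≤ x
    · rw [if_pos ⟨hQv, hc⟩]
      refine degMono_eq ?_ (ins_sorted hl hc) ?_
      · rw [map_add, Finsupp.degree_single, hd]
      · rw [support_add_single, ← hle]
        ext x
        simp [mem_ins]
    · rw [if_neg (by tauto)]
      push Not at hc
      obtain ⟨x, hx, h1, h2⟩ := hc
      refine degMono_eq_zero (a := x) (b := v) ?_ ?_ (by tauto)
      · have := (hmem x).1 hx
        simp [this]
      · simp
  rw [Finset.sum_congr rfl fun v _ => hterm v]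
  cases l with
  | nil => exact absurd ((hmem u).2 hu) (by simp)
  | cons a l =>
    have hau : a ≤ u := by
      rcases List.mem_cons.1 ((hmem u).2 hu) with rfl | h
      · exact le_rfl
      · exact ((List.pairwise_cons.1 hl).1 _ h).le
    refine sum_ins Q hl (fun x hx => Nat.one_le_iff_ne_zero.2 ((hmem x).1 hx))
      (fun v hv => by_contra fun h => hv ((hmem v).2 h)) ?_ ?_ ?_
    · rw [← hd, Finsupp.degree_apply, ← hle, ← List.sum_toFinset _ (hl.imp ne_of_lt)]
    · rcases hQ with hQ | ⟨i, hi, -⟩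
      · exact hQ a
      · rw [hi] at hQu ⊢
        have := hau i
        rw [hQu] at this
        exact le_antisymm this (Fin.zero_le _)
    · rcases hQ with hQ | ⟨i, hi, x, hx, hxi⟩
      · exact Or.inl hQ
      · exact Or.inr ⟨i, hi, x, (hmem x).2 hx, hxi⟩

/-- The degree functional on the polynomial ring, given by `degMono` on the monomial basis. -/
noncomputable def degMap : MvPolynomial (Cube ι) ℤ →ₗ[ℤ] ℤ :=
  (basisMonomials (Cube ι) ℤ).constr ℤ degMono

lemma degMap_monomial (e : Cube ι →₀ ℕ) : degMap (monomial e (1 : ℤ)) = degMono e := by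
  have h : monomial e (1 : ℤ) = basisMonomials (Cube ι) ℤ e := by rw [coe_basisMonomials]
  rw [degMap, h, Module.Basis.constr_basis]

lemma degMap_mul_eq_zero {g : MvPolynomial (Cube ι) ℤ}
    (h : ∀ e : Cube ι →₀ ℕ, degMap (monomial e 1 * g) = 0) (q : MvPolynomial (Cube ι) ℤ) :
    degMap (q * g) = 0 := by
  induction q using MvPolynomial.induction_on' with
  | monomial e c =>
    have hc : monomial e c = c • monomial e (1 : ℤ) := by
      rw [smul_monomial, smul_eq_mul, mul_one]
    rw [hc, smul_mul_assoc, map_smul, h, smul_zero]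
  | add p q hp hq => rw [add_mul, map_add, hp, hq, add_zero]

lemma degMap_sum (e : Cube ι →₀ ℕ) (Q : Cube ι → Prop) [DecidablePred Q] :
    degMap (monomial e 1 * ∑ v ∈ Finset.univ.filter Q, X v) =
      ∑ v : Cube ι, if Q v then degMono (e + Finsupp.single v 1) else 0 := by
  rw [Finset.mul_sum, map_sum, Finset.sum_filter]
  refine Finset.sum_congr rfl fun v _ => ?_
  rw [X, monomial_mul, one_mul, degMap_monomial]

/-- The degree functional factors through the Chow ring. -/
lemma degMap_eq_zero {x : MvPolynomial (Cube ι) ℤ} (hx : x ∈ Irat ι) : degMap x = 0 := by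
  suffices ∀ q, degMap (q * x) = 0 by simpa using this 1
  refine Submodule.span_induction ?_ (by simp) ?_ ?_ hx
  · rintro x ((⟨l, hl, rfl⟩ | ⟨u, rfl⟩) | ⟨u, w, i, hi, rfl⟩)
    · have hab : ∃ a ∈ l, ∃ b ∈ l, ¬ (a ≤ b ∨ b ≤ a) := by
        by_contra hcon
        push Not at hcon
        refine hl (List.pairwise_of_forall_mem_list fun a ha b hb => ?_)
        exact hcon a ha b hb
      obtain ⟨a, ha, b, hb, hab⟩ := hab
      refine degMap_mul_eq_zero fun e => ?_
      have hp : ∀ l : List (Cube ι), ∃ e' : Cube ι →₀ ℕ,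
          (l.map X).prod = monomial e' (1 : ℤ) ∧ ∀ x ∈ l, e' x ≠ 0 := by
        intro l
        induction l with
        | nil => exact ⟨0, by simp, by simp⟩
        | cons u l ih =>
          obtain ⟨e', h1, h2⟩ := ih
          refine ⟨Finsupp.single u 1 + e', ?_, fun x hx => ?_⟩
          · rw [List.map_cons, List.prod_cons, h1, X, monomial_mul, one_mul]
          · rcases List.mem_cons.1 hx with rfl | hx
            · simp
            · simp [h2 x hx]
      obtain ⟨e', h1, h2⟩ := hp l
      rw [h1, monomial_mul, one_mul, degMap_monomial]
      refine degMono_eq_zero (a := a) (b := b) ?_ ?_ hab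
      · simp [h2 a ha]
      · simp [h2 b hb]
    · refine degMap_mul_eq_zero fun e => ?_
      rw [← mul_assoc, X, monomial_mul, one_mul]
      have h := degMap_sum (e + Finsupp.single u 1) (fun _ => True)
      rw [Finset.filter_true] at h
      rw [h]
      have hu : (e + Finsupp.single u 1 : Cube ι →₀ ℕ) u ≠ 0 := by simp
      have ht := sum_degMono (fun _ => True) _ hu trivial (Or.inl fun _ => trivial)
      convert ht
    · refine degMap_mul_eq_zero fun e => ?_
      rw [← mul_assoc, X, X, monomial_mul, one_mul, monomial_mul, one_mul]
      set e' := e + (Finsupp.single u 1 + Finsupp.single w 1) with he'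
      have hu : e' u ≠ 0 := by simp [he']
      have hw : e' w ≠ 0 := by simp [he']
      have key : ∀ a b : Cube ι, e' a ≠ 0 → e' b ≠ 0 → a i = 0 → b i = 1 →
          (∑ v : Cube ι, if v i = 0 then degMono (e' + Finsupp.single v 1) else 0) = 0 :=
        fun a b ha hb hai hbi => by
          have h := sum_degMono (fun v => v i = 0) e' ha hai
            (Or.inr ⟨i, fun v => Iff.rfl, b, hb, hbi⟩)
          convert h
      have hs := degMap_sum e' (fun v => v i = u i)
      by_cases hui : u i = 0
      · rw [hs]
        simp only [hui]
        exact key u w hu hw hui (fin2_ne_zero.1 fun h => hi (hui.trans h.symm))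
      · have hui1 := fin2_ne_zero.1 hui
        have hwi : w i = 0 := fin2_ne_one.1 fun h => hi (hui1.trans h.symm)
        -- the points with `v i = 1` are handled as the difference of all points and `v i = 0`
        have h0 := key w u hw hu hwi hui1
        have ht := sum_degMono (fun _ => True) e' hu trivial (Or.inl fun _ => trivial)
        rw [hs]
        refine Eq.trans ?_ (sub_eq_zero.2 (ht.trans h0.symm))
        rw [← Finset.sum_sub_distrib]
        refine Finset.sum_congr rfl fun v _ => ?_
        by_cases hv : v i = 0
        · simp [hui1, hv]
        · simp [hui1, fin2_ne_zero.1 hv]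
  · intro x y _ _ hx hy q
    rw [mul_add, map_add, hx, hy, add_zero]
  · intro a x _ hx q
    rw [smul_eq_mul, ← mul_assoc]
    exact hx _

/-- A strictly increasing sequence of `card ι + 1` points has its `j`-th point in weight `j`, so
every factor of the coefficient is `1`. -/
lemma degMap_chain {c : ℕ → Cube ι} (hc : ∀ i j, i < j → j ≤ Fintype.card ι → c i < c j) :
    degMap (∏ j ∈ Finset.range (Fintype.card ι + 1), X (c j)) = 1 := by
  have hlow : ∀ j, j ≤ Fintype.card ι → j ≤ wt ι (c j) := by
    intro j
    induction j with
    | zero => intro _; exact Nat.zero_le _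
    | succ j ih =>
      intro hj
      have h1 := ih (by omega)
      have h2 := wt_strict (hc j (j + 1) (by omega) hj)
      omega
  have hup : ∀ k, k ≤ Fintype.card ι →
      wt ι (c (Fintype.card ι - k)) + k ≤ Fintype.card ι := by
    intro k
    induction k with
    | zero => intro _; exact wt_le _
    | succ k ih =>
      intro hk
      have h1 := ih (by omega)
      have h2 := wt_strict (hc (Fintype.card ι - (k + 1)) (Fintype.card ι - k) (by omega)
        (by omega))
      omega
  have hwt : ∀ j, j ≤ Fintype.card ι → wt ι (c j) = j := by
    intro j hj
    have h1 := hlow j hj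
    have h2 := hup (Fintype.card ι - j) (by omega)
    rw [show Fintype.card ι - (Fintype.card ι - j) = j by omega] at h2
    omega
  set N := Fintype.card ι with hN
  set e : Cube ι →₀ ℕ := ∑ j ∈ Finset.range (N + 1), Finsupp.single (c j) 1 with he
  have hprod : (∏ j ∈ Finset.range (N + 1), X (c j) : MvPolynomial (Cube ι) ℤ) =
      monomial e 1 := by
    rw [he, monomial_sum_one]; rfl
  have hinj : ∀ i ∈ Finset.range (N + 1), ∀ j ∈ Finset.range (N + 1), c i = c j → i = j := by
    intro i hi j hj h
    rw [Finset.mem_range] at hi hj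
    rw [← hwt i (by omega), ← hwt j (by omega), h]
  have he1 : ∀ j, j < N + 1 → e (c j) = 1 := by
    intro j hj
    rw [he, Finsupp.finsetSum_apply, Finset.sum_eq_single j]
    · simp
    · intro i hi hij
      rw [Finsupp.single_apply, if_neg]
      exact fun h => hij (hinj i hi j (Finset.mem_range.2 hj) h)
    · intro h
      exact absurd (Finset.mem_range.2 hj) h
  have hdeg : e.degree = N + 1 := by
    rw [he, map_sum]; simp
  have hl : ((List.range (N + 1)).map c).Pairwise (· < ·) := by
    rw [List.pairwise_map]
    refine List.pairwise_lt_range.imp_of_mem ?_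
    intro i j _ hj hij
    rw [List.mem_range] at hj
    exact hc i j hij (by omega)
  have hle : ((List.range (N + 1)).map c).toFinset = e.support := by
    ext x
    simp only [List.mem_toFinset, List.mem_map, List.mem_range, Finsupp.mem_support_iff]
    constructor
    · rintro ⟨j, hj, rfl⟩
      rw [he1 j hj]; exact one_ne_zero
    · intro h
      by_contra hcon
      push Not at hcon
      apply h
      rw [he, Finsupp.finsetSum_apply]
      refine Finset.sum_eq_zero fun j hj => ?_
      rw [Finsupp.single_apply, if_neg (hcon j (Finset.mem_range.1 hj))]
  rw [hprod, degMap_monomial, degMono_eq hdeg hl hle]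
  have hF : ∀ (l : List ℕ) (E : ℕ), (∀ j ∈ l, j < N + 1) → l = List.range' E l.length →
      chainCoeff e (l.map c) E E = 1 := by
    intro l
    induction l with
    | nil => intro E _ _; rfl
    | cons j l ih =>
      intro E hj hE
      rw [List.length_cons, List.range'_succ] at hE
      obtain ⟨rfl, hE⟩ := List.cons.inj hE
      have hjN := hj j (by simp)
      rw [List.map_cons, chainCoeff, he1 j hjN, hwt j (by omega), vfac_one,
        ih (j + 1) (fun x hx => hj x (by simp [hx])) hE]
      simp
  refine hF _ 0 (fun j hj => List.mem_range.1 hj) ?_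
  rw [List.length_range, List.range_eq_range']

end Degree

/-! ### Descent to a face -/

section Descent

lemma X_mul_X_mem {ι : Type} [Fintype ι] [DecidableEq ι] {a b : Cube ι}
    (h : ¬ (a ≤ b ∨ b ≤ a)) : (X a * X b : MvPolynomial (Cube ι) ℤ) ∈ Irat ι :=
  Ideal.subset_span (Or.inl (Or.inl ⟨[a, b], by simpa using h, by simp⟩))

variable {d : ℕ}

/-- The extension of a point of `{0,1}^J` to `{0,1}^d` by the values of `c` outside `J`. -/
def extend (J : Finset (Fin d)) (c : Cube (Fin d)) (u : Cube ↥J) : Cube (Fin d) :=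
  fun i => if h : i ∈ J then u ⟨i, h⟩ else c i

lemma extend_of_mem {J : Finset (Fin d)} (c : Cube (Fin d)) (u : Cube ↥J) (k : ↥J) :
    extend J c u k = u k := by
  simp [extend]

lemma extend_of_notMem {J : Finset (Fin d)} (c : Cube (Fin d)) (u : Cube ↥J) {i : Fin d}
    (hi : i ∉ J) : extend J c u i = c i := by
  simp [extend, hi]

lemma extend_le {J : Finset (Fin d)} {c : Cube (Fin d)} {u w : Cube ↥J} :
    extend J c u ≤ extend J c w ↔ u ≤ w := by
  constructor
  · intro h k
    simpa only [extend_of_mem] using h k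
  · intro h i
    by_cases hi : i ∈ J
    · simpa [extend, hi] using h ⟨i, hi⟩
    · simp [extend, hi]

lemma extend_injective (J : Finset (Fin d)) (c : Cube (Fin d)) :
    Function.Injective (extend J c) := fun _ _ h =>
  le_antisymm (extend_le.1 h.le) (extend_le.1 h.ge)

lemma extend_lt {J : Finset (Fin d)} {c : Cube (Fin d)} {u w : Cube ↥J} (h : u < w) :
    extend J c u < extend J c w :=
  lt_of_le_of_ne (extend_le.2 h.le) fun h' => h.ne (extend_injective J c h')

lemma extend_restr {J : Finset (Fin d)} {c x : Cube (Fin d)} (h : ∀ i ∉ J, x i = c i) :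
    extend J c (restr J x) = x := by
  funext i
  by_cases hi : i ∈ J
  · simp [extend, hi, restr]
  · rw [extend_of_notMem _ _ hi, h i hi]

/-- A relation `m · ∑_{x ∈ S} C_x` of the big cube restricts to a relation with the sum over
extended points only, provided the other points of `S` are annihilated by `m`. -/
lemma sum_transfer {J : Finset (Fin d)} {c : Cube (Fin d)} {m : MvPolynomial (Cube (Fin d)) ℤ}
    (S : Finset (Cube (Fin d))) (T : Finset (Cube ↥J)) (hT : ∀ t ∈ T, extend J c t ∈ S)
    (hS : ∀ x ∈ S, (∀ t ∈ T, extend J c t ≠ x) → X x * m ∈ Irat (Fin d))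
    (h : m * ∑ x ∈ S, X x ∈ Irat (Fin d)) :
    m * ∑ t ∈ T, X (extend J c t) ∈ Irat (Fin d) := by
  have himg : ∑ t ∈ T, (X (extend J c t) : MvPolynomial (Cube (Fin d)) ℤ) =
      ∑ x ∈ T.image (extend J c), X x :=
    (Finset.sum_image fun a _ b _ hab => extend_injective J c hab).symm
  have hsub : T.image (extend J c) ⊆ S := by
    intro x hx
    obtain ⟨t, ht, rfl⟩ := Finset.mem_image.1 hx
    exact hT t ht
  rw [← Finset.sum_sdiff hsub, mul_add] at h
  rw [himg]
  refine (Ideal.add_mem_iff_right _ ?_).1 h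
  rw [Finset.mul_sum]
  refine Ideal.sum_mem _ fun x hx => ?_
  rw [Finset.mem_sdiff] at hx
  rw [mul_comm]
  exact hS x hx.1 fun t ht hxt => hx.2 (Finset.mem_image.2 ⟨t, ht, hxt⟩)

lemma fin2_eq_of_ne {a b c : Fin 2} (h : a ≠ c) (h' : b ≠ c) : a = b := by
  revert a b c; decide

/-- Extending the relations of `□^J` and multiplying by `C_v` gives relations of `□^d`. The
hypothesis `h1` says that a point comparable with `v` which agrees with `c` at `i₀` is an
extension of a point of `□^J`. The lemma is used with `c = 0` for the points below `v`, and with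
`c = 1` for those above it. -/
lemma rename_extend_mul_mem {J : Finset (Fin d)} {c v : Cube (Fin d)} {i₀ : Fin d}
    (h0 : i₀ ∉ J) (hv : v i₀ ≠ c i₀)
    (h1 : ∀ x : Cube (Fin d), (x ≤ v ∨ v ≤ x) → x i₀ = c i₀ → ∀ i ∉ J, x i = c i)
    (h2 : ∀ k ∈ J, v k = v i₀) {p : MvPolynomial (Cube ↥J) ℤ} (hp : p ∈ Irat ↥J) :
    rename (extend J c) p * X v ∈ Irat (Fin d) := by
  have hzero : ∀ a x : Cube (Fin d), ∀ m : MvPolynomial (Cube (Fin d)) ℤ,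
      ¬ (a ≤ x ∨ x ≤ a) → X a * (X x * m) ∈ Irat (Fin d) := by
    intro a x m h
    rw [← mul_assoc]
    exact Ideal.mul_mem_right _ _ (X_mul_X_mem h)
  -- the analogue of (R2) comes from (R3) for the pair `u, v`, which differs at `i₀`
  have hR2 : ∀ u : Cube ↥J, X (extend J c u) * X v * ∑ t : Cube ↥J, X (extend J c t) ∈
      Irat (Fin d) := by
    intro u
    refine sum_transfer (Finset.univ.filter fun x => x i₀ = extend J c u i₀) _ ?_ ?_ ?_
    · intro t _
      simp [extend_of_notMem _ _ h0]
    · intro x hx hxt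
      simp only [Finset.mem_filter, Finset.mem_univ, true_and, extend_of_notMem _ _ h0] at hx
      rw [mul_comm (X (extend J c u))]
      refine hzero _ _ _ fun hc => ?_
      exact hxt _ (Finset.mem_univ _) (extend_restr (h1 x hc hx))
    · refine Ideal.subset_span (Or.inr ⟨extend J c u, v, i₀, ?_, rfl⟩)
      rw [extend_of_notMem _ _ h0]
      exact hv.symm
  -- (R3) for a pair whose second member agrees with `v` at `k`
  have hR3 : ∀ y y' : Cube ↥J, ∀ k : ↥J, y k ≠ y' k → y' k = v k →
      X (extend J c y) * X (extend J c y') * X v *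
        ∑ t ∈ Finset.univ.filter (fun t : Cube ↥J => t k = y k), X (extend J c t) ∈
      Irat (Fin d) := by
    intro y y' k hyy hyv
    refine sum_transfer (Finset.univ.filter fun x => x k = y k) _ ?_ ?_ ?_
    · intro t ht
      simpa [extend_of_mem] using ht
    · intro x hx hxt
      simp only [Finset.mem_filter, Finset.mem_univ, true_and] at hx
      by_cases hc : x ≤ v ∨ v ≤ x
      · by_cases hx0 : x i₀ = c i₀
        · refine absurd (extend_restr (h1 x hc hx0)) (hxt _ ?_)
          simpa [restr] using hx
        -- here `x` and `y'` take opposite pairs of values at the coordinates `k` and `i₀`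
        · rw [mul_comm (X (extend J c y)), mul_assoc]
          refine hzero _ _ _ fun hcmp => ?_
          have e1 : x i₀ = y' k := by
            rw [hyv, h2 k k.2]; exact fin2_eq_of_ne hx0 hv
          have e2 : extend J c y' i₀ = x k := by
            rw [extend_of_notMem _ _ h0, hx]
            refine fin2_eq_of_ne (c := v i₀) hv.symm ?_
            rw [← h2 k k.2, ← hyv]; exact hyy
          have e3 : extend J c y' k = y' k := extend_of_mem _ _ _
          have hne : x k ≠ y' k := by rw [hx]; exact hyy
          rcases hcmp with h | h
          · have a1 := h k
            have a2 := h i₀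
            rw [e3] at a1
            rw [e2, e1] at a2
            exact hne (le_antisymm a1 a2)
          · have a1 := h k
            have a2 := h i₀
            rw [e3] at a1
            rw [e2, e1] at a2
            exact hne (le_antisymm a2 a1)
      · rw [mul_comm _ (X v)]
        exact hzero _ _ _ hc
    · rw [mul_right_comm]
      refine Ideal.mul_mem_right _ _ (Ideal.subset_span
        (Or.inr ⟨extend J c y, extend J c y', k, ?_, ?_⟩))
      · simpa only [extend_of_mem] using hyy
      · simp only [extend_of_mem]
  refine Submodule.span_induction ?_ ?_ ?_ ?_ hp
  · rintro x ((⟨l, hl, rfl⟩ | ⟨u, rfl⟩) | ⟨u, w, k, hk, rfl⟩)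
    · refine Ideal.mul_mem_right _ _ (Ideal.subset_span
        (Or.inl (Or.inl ⟨l.map (extend J c), ?_, ?_⟩)))
      · rw [List.pairwise_map]
        simpa only [extend_le] using hl
      · rw [map_list_prod, List.map_map, List.map_map]
        congr 1
        refine List.map_congr_left fun x _ => ?_
        simp
    · have h := hR2 u
      simp only [map_mul, map_sum, rename_X]
      rwa [mul_right_comm]
    · simp only [map_mul, map_sum, rename_X]
      rw [mul_right_comm]
      by_cases hw : w k = v k
      · exact hR3 u w k hk hw
      -- if `u` rather than `w` agrees with `v` at `k`, subtract (R3) for `w, u` from (R2)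
      · have hu : u k = v k := fin2_eq_of_ne hk (Ne.symm hw)
        have e1 := hR3 w u k hk.symm hu
        have e2 := Ideal.mul_mem_left _ (X (extend J c w)) (hR2 u)
        have e3 : (Finset.univ.filter fun t : Cube ↥J => t k = w k) =
            Finset.univ.filter fun t : Cube ↥J => ¬ t k = u k := by
          ext t
          simp only [Finset.mem_filter, Finset.mem_univ, true_and]
          exact ⟨fun h h' => hk (h'.symm.trans h), fun h => fin2_eq_of_ne h hk.symm⟩
        rw [e3] at e1
        rw [← Finset.sum_filter_add_sum_filter_not Finset.univ
          (fun t : Cube ↥J => t k = u k)] at e2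
        have e4 := Ideal.sub_mem _ e2 e1
        convert e4 using 1
        ring
  · simp
  · intro x y _ _ hx hy
    rw [map_add, add_mul]
    exact Ideal.add_mem _ hx hy
  · intro a x _ hx
    rw [smul_eq_mul, map_mul, mul_assoc]
    exact Ideal.mul_mem_left _ _ hx

/-- The standard chain is strictly increasing: the rank function of the linear order is onto, and
the coordinate of rank `i` separates the `i`-th point from all later ones. -/
lemma chainVtx_lt {ι : Type} [Fintype ι] [DecidableEq ι] [LinearOrder ι] {i j : ℕ} (hij : i < j)
    (hj : j ≤ Fintype.card ι) : chainVtx ι i < chainVtx ι j := by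
  have hlt : ∀ a : ι, (Finset.univ.filter fun i' => i' < a).card < Fintype.card ι := fun a =>
    Finset.card_lt_univ_of_notMem (x := a) (by simp)
  let r : ι → Fin (Fintype.card ι) := fun a => ⟨_, hlt a⟩
  have hr : StrictMono r := by
    intro a b hab
    refine Finset.card_lt_card (Finset.ssubset_iff_of_subset ?_ |>.2 ⟨a, ?_, ?_⟩)
    · intro x hx
      simp only [Finset.mem_filter, Finset.mem_univ, true_and] at hx ⊢
      exact hx.trans hab
    · simpa using hab
    · simp
  have hsurj : Function.Surjective r :=
    (Fintype.bijective_iff_injective_and_card r).2 ⟨hr.injective, by simp⟩ |>.2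
  obtain ⟨a, ha⟩ := hsurj ⟨i, hij.trans_le hj⟩
  have ha' : (Finset.univ.filter fun i' => i' < a).card = i := congrArg Fin.val ha
  refine lt_of_le_of_ne (fun b => ?_) fun h => ?_
  · simp only [chainVtx]
    split_ifs with h1 h2
    · exact le_rfl
    · omega
    · exact Fin.zero_le _
    · exact le_rfl
  · have := congrFun h a
    simp [chainVtx, ha', hij] at this

/-- The two descent relations, applied one after the other inside a linear functional. -/
lemma mul_eq_of_linear {R : Type*} [CommRing R] (f : R →ₗ[ℤ] ℤ) {A1 A2 G1 G2 V : R}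
    {n1 n2 : ℤ} (h1 : f ((A1 - n1 • G1) * V * A2) = 0) (h2 : f (G1 * ((A2 - n2 • G2) * V)) = 0)
    (hone : f (G1 * V * G2) = 1) : f (A1 * V * A2) = n1 * n2 := by
  have e1 : (A1 - n1 • G1) * V * A2 = A1 * V * A2 - n1 • (G1 * V * A2) := by
    simp only [zsmul_eq_mul]; ring
  have e2 : G1 * ((A2 - n2 • G2) * V) = G1 * V * A2 - n2 • (G1 * V * G2) := by
    simp only [zsmul_eq_mul]; ring
  rw [e1, map_sub, map_zsmul] at h1
  rw [e2, map_sub, map_zsmul, hone] at h2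
  rw [sub_eq_zero.1 h1, sub_eq_zero.1 h2]
  simp

end Descent

end ChowCube

/-! ### The factorization -/

/-- **Proposition 4.5**: with `v` of weight `1 < ℓ < d` and support `I`, `i_1 ∈ I`,
`i_2 ∉ I`, `I_1 = I∖{i_1}`, `I_2 = Iᶜ∖{i_2}`; `α_1` a degree-`ℓ` monomial in variables
supported in `I_1` and `α_2` a degree-`(d−ℓ)` monomial in variables whose supports all
contain `I ∪ {i_2}`, one has `deg(α_1 · C_v · α_2) = deg(α_1|_{I_1}) · deg(α_2|_{I_2})`,
degrees being computed against the degree-one generators of the corresponding top graded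
pieces. -/
theorem ChowCube.deg_factorization
    (d : ℕ) (hd : 2 ≤ d) (v : ChowCube.Cube (Fin d))
    (hl1 : 1 < ChowCube.wt (Fin d) v) (hl2 : ChowCube.wt (Fin d) v < d)
    (i1 i2 : Fin d) (hi1 : i1 ∈ ChowCube.supp v) (hi2 : i2 ∉ ChowCube.supp v)
    (m t : ℕ)
    (w : Fin m → ChowCube.Cube (Fin d))
    (hw : ∀ j, ChowCube.supp (w j) ⊆ (ChowCube.supp v).erase i1)
    (a : Fin m → ℕ) (ha : ∀ j, 1 ≤ a j) (hasum : ∑ j, a j = ChowCube.wt (Fin d) v)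
    (z : Fin t → ChowCube.Cube (Fin d))
    (hz : ∀ j, insert i2 (ChowCube.supp v) ⊆ ChowCube.supp (z j))
    (b : Fin t → ℕ) (hb : ∀ j, 1 ≤ b j) (hbsum : ∑ j, b j = d - ChowCube.wt (Fin d) v) :
    ∀ nn n1 n2 : ℤ,
      ChowCube.mk (Fin d)
          ((∏ j, MvPolynomial.X (w j) ^ a j) * MvPolynomial.X v *
            ∏ j, MvPolynomial.X (z j) ^ b j) =
        nn • ChowCube.mk (Fin d) (ChowCube.genMono (Fin d)) →
      ChowCube.mk (↥((ChowCube.supp v).erase i1))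
          (∏ j, MvPolynomial.X (ChowCube.restr ((ChowCube.supp v).erase i1) (w j)) ^ a j) =
        n1 • ChowCube.mk (↥((ChowCube.supp v).erase i1))
          (ChowCube.genMono (↥((ChowCube.supp v).erase i1))) →
      ChowCube.mk (↥(((ChowCube.supp v)ᶜ).erase i2))
          (∏ j, MvPolynomial.X (ChowCube.restr (((ChowCube.supp v)ᶜ).erase i2) (z j)) ^ b j) =
        n2 • ChowCube.mk (↥(((ChowCube.supp v)ᶜ).erase i2))
          (ChowCube.genMono (↥(((ChowCube.supp v)ᶜ).erase i2))) →
      nn = n1 * n2 := by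
  intro nn n1 n2 hn h1 h2
  set ℓ := ChowCube.wt (Fin d) v with hℓ
  set J1 := (ChowCube.supp v).erase i1 with hJ1
  set J2 := ((ChowCube.supp v)ᶜ).erase i2 with hJ2
  have hv1 : v i1 = 1 := by simpa [ChowCube.supp] using hi1
  have hv2 : v i2 = 0 := ChowCube.fin2_ne_one.1 (by simpa [ChowCube.supp] using hi2)
  have hmk : ∀ {ι : Type} [Fintype ι] [DecidableEq ι] {p q : MvPolynomial (ChowCube.Cube ι) ℤ}
      {n : ℤ}, ChowCube.mk ι p = n • ChowCube.mk ι q → p - n • q ∈ ChowCube.Irat ι := by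
    intro ι _ _ p q n h
    rw [← map_zsmul] at h
    exact Ideal.Quotient.eq.1 h
  have hcard1 : Fintype.card ↥J1 = ℓ - 1 := by
    rw [Fintype.card_coe, hJ1, Finset.card_erase_of_mem hi1]; rfl
  have hcard2 : Fintype.card ↥J2 = d - ℓ - 1 := by
    rw [Fintype.card_coe, hJ2, Finset.card_erase_of_mem (Finset.mem_compl.2 hi2),
      Finset.card_compl, Fintype.card_fin]; rfl
  have hmem1 : ∀ i, i ∈ J1 ↔ i ≠ i1 ∧ v i = 1 := by intro i; simp [hJ1, ChowCube.supp]
  have hmem2 : ∀ i, i ∈ J2 ↔ i ≠ i2 ∧ v i ≠ 1 := by intro i; simp [hJ2, ChowCube.supp]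
  have hw0 : ∀ j, ∀ i ∉ J1, w j i = 0 := by
    intro j i hi
    refine ChowCube.fin2_ne_one.1 fun h => hi (hw j ?_)
    simpa [ChowCube.supp] using h
  have hz1 : ∀ j, ∀ i ∉ J2, z j i = 1 := by
    intro j i hi
    have : i ∈ ChowCube.supp (z j) := by
      refine hz j ?_
      rw [hmem2] at hi
      simp only [Finset.mem_insert, ChowCube.supp, Finset.mem_filter, Finset.mem_univ, true_and]
      tauto
    simpa [ChowCube.supp] using this
  have hk1 : ∀ {p}, p ∈ ChowCube.Irat ↥J1 → rename (ChowCube.extend J1 fun _ => 0) p * X v ∈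
      ChowCube.Irat (Fin d) := by
    intro p hp
    refine ChowCube.rename_extend_mul_mem (i₀ := i1) (by simp [hJ1]) ?_ ?_ ?_ hp
    · rw [hv1]; exact one_ne_zero
    · intro x hx hx1 i hi
      have hxv : x ≤ v := by
        refine hx.resolve_right fun h => ?_
        have := h i1
        rw [hx1, hv1] at this
        exact absurd this (not_le_of_gt Fin.zero_lt_one)
      by_cases hii : i = i1
      · rw [hii, hx1]
      · rw [hmem1] at hi
        have hvi : v i = 0 := ChowCube.fin2_ne_one.1 (by tauto)
        have := hxv i
        rw [hvi] at this
        exact le_antisymm this (Fin.zero_le _)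
    · intro k hk
      rw [((hmem1 k).1 hk).2, hv1]
  have hk2 : ∀ {p}, p ∈ ChowCube.Irat ↥J2 → rename (ChowCube.extend J2 fun _ => 1) p * X v ∈
      ChowCube.Irat (Fin d) := by
    intro p hp
    refine ChowCube.rename_extend_mul_mem (i₀ := i2) (by simp [hJ2]) ?_ ?_ ?_ hp
    · rw [hv2]; exact zero_ne_one
    · intro x hx hx2 i hi
      have hxv : v ≤ x := by
        refine hx.resolve_left fun h => ?_
        have := h i2
        rw [hx2, hv2] at this
        exact absurd this (not_le_of_gt Fin.zero_lt_one)
      by_cases hii : i = i2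
      · rw [hii, hx2]
      · rw [hmem2] at hi
        have hvi : v i = 1 := by tauto
        have := hxv i
        rw [hvi] at this
        exact le_antisymm (Fin.le_last _) this
    · intro k hk
      rw [ChowCube.fin2_ne_one.1 ((hmem2 k).1 hk).2, hv2]
  have hI1 := hk1 (hmk h1)
  have hI2 := hk2 (hmk h2)
  have hI := hmk hn
  have hr1 : rename (ChowCube.extend J1 fun _ => 0)
      (∏ j, X (ChowCube.restr J1 (w j)) ^ a j : MvPolynomial _ ℤ) = ∏ j, X (w j) ^ a j := by
    simp only [map_prod, map_pow, rename_X]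
    refine Finset.prod_congr rfl fun j _ => ?_
    rw [ChowCube.extend_restr (hw0 j)]
  have hr2 : rename (ChowCube.extend J2 fun _ => 1)
      (∏ j, X (ChowCube.restr J2 (z j)) ^ b j : MvPolynomial _ ℤ) = ∏ j, X (z j) ^ b j := by
    simp only [map_prod, map_pow, rename_X]
    refine Finset.prod_congr rfl fun j _ => ?_
    rw [ChowCube.extend_restr (hz1 j)]
  rw [map_sub, map_zsmul, hr1] at hI1
  rw [map_sub, map_zsmul, hr2] at hI2
  -- the two generators together with `C_v` form a maximal chain
  have hone : ChowCube.degMap (rename (ChowCube.extend J1 fun _ => 0) (ChowCube.genMono ↥J1) *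
      X v * rename (ChowCube.extend J2 fun _ => 1) (ChowCube.genMono ↥J2)) = 1 := by
    set c : ℕ → ChowCube.Cube (Fin d) := fun j =>
      if j < ℓ then ChowCube.extend J1 (fun _ => 0) (ChowCube.chainVtx ↥J1 j)
      else if j = ℓ then v
      else ChowCube.extend J2 (fun _ => 1) (ChowCube.chainVtx ↥J2 (j - (ℓ + 1))) with hc
    have hlow : ∀ u : ChowCube.Cube ↥J1, ChowCube.extend J1 (fun _ => 0) u < v := by
      intro u
      refine lt_of_le_of_ne (fun i => ?_) fun h => ?_
      · by_cases hi : i ∈ J1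
        · rw [((hmem1 i).1 hi).2]; exact Fin.le_last _
        · rw [ChowCube.extend_of_notMem _ _ hi]; exact Fin.zero_le _
      · have := congrFun h i1
        rw [ChowCube.extend_of_notMem _ _ (by simp [hJ1]), hv1] at this
        exact zero_ne_one this
    have hhigh : ∀ u : ChowCube.Cube ↥J2, v < ChowCube.extend J2 (fun _ => 1) u := by
      intro u
      refine lt_of_le_of_ne (fun i => ?_) fun h => ?_
      · by_cases hi : i ∈ J2
        · rw [ChowCube.fin2_ne_one.1 ((hmem2 i).1 hi).2]; exact Fin.zero_le _
        · rw [ChowCube.extend_of_notMem _ _ hi]; exact Fin.le_last _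
      · have := congrFun h i2
        rw [ChowCube.extend_of_notMem _ _ (by simp [hJ2]), hv2] at this
        exact zero_ne_one this
    have hmono : ∀ i j, i < j → j ≤ Fintype.card (Fin d) → c i < c j := by
      intro i j hij hj
      rw [Fintype.card_fin] at hj
      simp only [hc]
      rcases lt_trichotomy i ℓ with hi | hi | hi
      · rw [if_pos hi]
        rcases lt_trichotomy j ℓ with hj' | hj' | hj'
        · rw [if_pos hj']
          exact ChowCube.extend_lt (ChowCube.chainVtx_lt hij (by omega))
        · rw [if_neg (by omega), if_pos hj']
          exact hlow _
        · rw [if_neg (by omega), if_neg (by omega)]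
          exact (hlow _).trans (hhigh _)
      · rw [if_neg (by omega), if_pos hi, if_neg (by omega), if_neg (by omega)]
        exact hhigh _
      · rw [if_neg (by omega), if_neg (by omega), if_neg (by omega), if_neg (by omega)]
        exact ChowCube.extend_lt (ChowCube.chainVtx_lt (by omega) (by omega))
    have hP1 : rename (ChowCube.extend J1 fun _ => 0) (ChowCube.genMono ↥J1) =
        ∏ j ∈ Finset.range ℓ, (X (c j) : MvPolynomial _ ℤ) := by
      rw [ChowCube.genMono, hcard1, Nat.sub_add_cancel (by omega), map_prod]
      refine Finset.prod_congr rfl fun j hj => ?_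
      rw [rename_X]
      simp only [hc]
      rw [if_pos (Finset.mem_range.1 hj)]
    have hP2 : rename (ChowCube.extend J2 fun _ => 1) (ChowCube.genMono ↥J2) =
        ∏ j ∈ Finset.range (d - ℓ), (X (c (ℓ + 1 + j)) : MvPolynomial _ ℤ) := by
      rw [ChowCube.genMono, hcard2, Nat.sub_add_cancel (by omega), map_prod]
      refine Finset.prod_congr rfl fun j hj => ?_
      rw [rename_X]
      simp only [hc]
      rw [if_neg (by omega), if_neg (by omega), Nat.add_sub_cancel_left]
    have hcv : c ℓ = v := by
      simp only [hc]
      rw [if_neg (lt_irrefl _), if_pos trivial]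
    have hchain := ChowCube.degMap_chain hmono
    rw [Fintype.card_fin, show d + 1 = ℓ + 1 + (d - ℓ) by omega, Finset.prod_range_add,
      Finset.prod_range_succ, hcv] at hchain
    rw [hP1, hP2]
    exact hchain
  have hgen : ChowCube.degMap (ChowCube.genMono (Fin d)) = 1 :=
    ChowCube.degMap_chain fun i j hij hj => ChowCube.chainVtx_lt hij hj
  have e1 := ChowCube.degMap_eq_zero hI
  rw [map_sub, map_zsmul, hgen] at e1
  have e2 := ChowCube.degMap_eq_zero (Ideal.mul_mem_right (∏ j, X (z j) ^ b j) _ hI1)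
  have e3 := ChowCube.degMap_eq_zero (Ideal.mul_mem_left _
    (rename (ChowCube.extend J1 fun _ => 0) (ChowCube.genMono ↥J1)) hI2)
  rw [smul_eq_mul, mul_one] at e1
  rw [← sub_eq_zero.1 e1]
  exact ChowCube.mul_eq_of_linear _ e2 e3 hone
end

section
/- Let d ≥ 1. Identify {0,1}^d with 𝔽_2^d and set F_w = Σ_{v∈𝔽_2^d} (−1)^{⟨v,w⟩} C_v with ⟨v,w⟩ = Σ_i v_i w_i ∈ 𝔽_2. Let w_0, w_1, …, w_d ∈ 𝔽_2^d and let 𝒫 = {P_1,…,P_k} be a partition of {1,…,d} into k non-empty sets. For w ∈ 𝔽_2^d let α(w,𝒫) be the number of blocks P_j containing at least one index l with w_l = 1. If Σ_{i=0}^{d} α(w_i, 𝒫) < d + k, then the product F_{w_0} F_{w_1} ⋯ F_{w_d} is zero in the localized Chow ring Chow(□^d)[1/2]. -/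
/-!
The product already vanishes before inverting `2`. Fix a vertex `v` and let `Q` be the quotient of
`ℤ[C_u]` by the ideal of all `p` with `C_v p ∈ I_rat`; geometrically, this is restriction to the
component `C_v`, which behaves like a `d`-dimensional variety fibred over a smaller one for every
set `S` of coordinates. For `S ⊆ {1,…,d}` let `L_S ⊆ Q` be the span of the classes
`B_S(u) = Σ_{x|_S = u} C_x` pulled back from the cube on the coordinates `S`. The key fact
(`span_pow_eq_bot`) is `L_S ^ (|S| + 1) = 0`, proved by induction on `S`. For `S = S' ∪ {i}` let
`X ⊆ L_S` be the span of those `B_S(u)` with `u_i ≠ v_i`. Then `L_S ⊆ L_{S'} + X`, and the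
comparability relations together with (R3) give `X · X ⊆ X · L_{S'}`. Hence
`L_S ^ (n+1) ⊆ L_{S'} ^ (n+1) + X · L_{S'} ^ n`, which is zero for `n = |S'| + 1`.

Since `F_w` is a combination of the `C_v`, it follows that `F_w · ∏ F_{w_i}` vanishes as soon as
the product has at least `|S| + 1` factors, all with `w_i` supported in `S`. The numerical
hypothesis reads `Σ_j n_j < Σ_j (|P_j| + 1)`, where `n_j` counts the `w_i` whose support meets
`P_j`. So `n_j ≤ |P_j|` for some `j`, and `S` is taken to be the complement of that block.
-/

open MvPolynomial

namespace ChowCube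

section Fourier

variable (ι : Type) [Fintype ι] [DecidableEq ι]

/-- The `𝔽_2`-pairing `⟨v,w⟩ = Σ_i v_i w_i`, as a natural number (only its parity
matters). -/
def ip (v w : Cube ι) : ℕ := ∑ i, (v i : ℕ) * (w i : ℕ)

/-- The Fourier dual generators `F_w = Σ_v (−1)^{⟨v,w⟩} C_v`. -/
noncomputable def F (w : Cube ι) : MvPolynomial (Cube ι) ℤ :=
  ∑ v : Cube ι, MvPolynomial.C ((-1 : ℤ) ^ ip ι v w) * MvPolynomial.X v

/-- The standard basis vector `e_i` of `𝔽_2^ι`. -/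
def unitVec (i : ι) : Cube ι := fun j => if j = i then 1 else 0

/-- The ideal `Ĩ_rat(□^ι)` generated by the Fourier relations (R*1), (R*2), (R*3). -/
noncomputable def IratF : Ideal (MvPolynomial (Cube ι) ℤ) :=
  Ideal.span
    ({ p | ∃ w : Cube ι, p = F ι 0 * F ι w } ∪
     { p | ∃ (i : ι) (w z : Cube ι),
        p = F ι (unitVec ι i) * (F ι w - F ι (w + unitVec ι i)) *
              (F ι z + F ι (z + unitVec ι i)) } ∪
     { p | ∃ (i j : ι) (w z : Cube ι),
        p = (F ι (w + unitVec ι i + unitVec ι j) - F ι w) *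
              (F ι (z + unitVec ι i + unitVec ι j) - F ι z)
          - (F ι (w + unitVec ι i) - F ι (w + unitVec ι j)) *
              (F ι (z + unitVec ι i) - F ι (z + unitVec ι j)) })

/-- The coefficient extension `ℤ[C_v] → ℤ[1/2][C_v]` inverting `2`. -/
noncomputable def toHalf :
    MvPolynomial (Cube ι) ℤ →+* MvPolynomial (Cube ι) (Localization.Away (2 : ℤ)) :=
  MvPolynomial.map (algebraMap ℤ (Localization.Away (2 : ℤ)))

end Fourier

end ChowCube


namespace ChowCube

section Vanishing

variable {ι : Type} [DecidableEq ι]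

/-! ### Classes pulled back from a face of coordinates -/

/-- Projection of a vertex to the coordinates in `S`, re-embedded in the full cube by
putting `0` in all other coordinates. -/
def res (S : Finset ι) (x : Cube ι) : Cube ι := fun i => if i ∈ S then x i else 0

lemma res_mono (S : Finset ι) {x y : Cube ι} (h : x ≤ y) : res S x ≤ res S y := by
  intro i
  unfold res
  split_ifs
  · exact h i
  · exact le_rfl

lemma res_eq_update_iff {S : Finset ι} {i : ι} (hi : i ∉ S) (x r : Cube ι) :
    res S x = Function.update r i 0 ↔
      res (insert i S) x = r ∨ res (insert i S) x = Function.update r i (1 - r i) := by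
  have key : res S x = Function.update (res (insert i S) x) i 0 := by
    funext j
    by_cases hj : j = i
    · subst hj; simp [res, hi]
    · simp [res, hj]
  have two : ∀ a b : Fin 2, a = b ∨ a = 1 - b := by decide
  constructor
  · intro h
    rw [key] at h
    have off : ∀ j, j ≠ i → res (insert i S) x j = r j := by
      intro j hj
      have := congrFun h j
      simpa [hj] using this
    rcases two (res (insert i S) x i) (r i) with h1 | h1
    · left
      funext j
      by_cases hj : j = i
      · subst hj; exact h1
      · exact off j hj
    · right
      funext j
      by_cases hj : j = i
      · subst hj; simpa using h1
      · simpa [hj] using off j hj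
  · rintro (h | h) <;> simp [key, h]

variable [Fintype ι] {Q : Type} [CommRing Q] (c : Cube ι → Q)

/-- The pullback of the divisor of the vertex `u` of the cube on the coordinates `S`. Vertices of
that smaller cube are encoded as the `u` vanishing outside `S`; for all other `u` the sum is
empty. -/
def pull (S : Finset ι) (u : Cube ι) : Q := ∑ x ∈ Finset.univ.filter (fun x => res S x = u), c x

/-- A combination of the `c x` whose coefficients depend only on the coordinates in `S` is a
combination of pullbacks. -/
lemma sum_mul_eq_sum_pull (S : Finset ι) (f : Cube ι → ℤ) (hf : ∀ x, f x = f (res S x)) :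
    ∑ x, f x • c x = ∑ u, f u • pull c S u := by
  rw [← Finset.sum_fiberwise Finset.univ (res S)]
  refine Finset.sum_congr rfl fun u _ => ?_
  unfold pull
  rw [Finset.smul_sum]
  refine Finset.sum_congr rfl fun x hx => ?_
  rw [hf x, (Finset.mem_filter.1 hx).2]

/-- A vertex of the smaller cube has two preimages under forgetting the coordinate `i`. -/
lemma pull_update {S : Finset ι} {i : ι} (hi : i ∉ S) (r : Cube ι) :
    pull c S (Function.update r i 0) =
      pull c (insert i S) r + pull c (insert i S) (Function.update r i (1 - r i)) := by
  unfold pull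
  rw [← Finset.sum_union]
  · refine Finset.sum_congr ?_ fun _ _ => rfl
    ext x
    simp [res_eq_update_iff hi]
  · rw [Finset.disjoint_left]
    intro x hx hx'
    have h1 := (Finset.mem_filter.1 hx).2
    have h2 := (Finset.mem_filter.1 hx').2
    have := congrFun (h1.symm.trans h2) i
    have two : ∀ a : Fin 2, a ≠ 1 - a := by decide
    exact two (r i) (by simpa using this)

lemma pull_mul_pull_eq_zero
    (h1 : ∀ u w : Cube ι, ¬ (u ≤ w ∨ w ≤ u) → c u * c w = 0)
    (S : Finset ι) {u w : Cube ι} (h : ¬ (u ≤ w ∨ w ≤ u)) :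
    pull c S u * pull c S w = 0 := by
  unfold pull
  rw [Finset.sum_mul_sum]
  refine Finset.sum_eq_zero fun x hx => Finset.sum_eq_zero fun y hy => h1 x y fun hxy => h ?_
  rw [← (Finset.mem_filter.1 hx).2, ← (Finset.mem_filter.1 hy).2]
  exact hxy.imp (res_mono S) (res_mono S)

/-! ### Nilpotency of pulled-back divisors on a component -/

/-- If `X · X ⊆ X · L`, then a power of `L + X` needs `X` at most linearly. -/
lemma sup_pow_le (L X : Submodule ℤ Q) (h : X * X ≤ X * L) (n : ℕ) :
    (L ⊔ X) ^ (n + 1) ≤ L ^ (n + 1) ⊔ X * L ^ n := by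
  induction n with
  | zero => simp
  | succ n ih =>
    rw [pow_succ]
    refine (mul_le_mul' ih le_rfl).trans ?_
    rw [Submodule.sup_mul, Submodule.mul_sup, Submodule.mul_sup]
    refine sup_le (sup_le ?_ ?_) (sup_le ?_ ?_)
    · rw [← pow_succ]; exact le_sup_left
    · rw [mul_comm]; exact le_sup_right
    · rw [mul_assoc, ← pow_succ]; exact le_sup_right
    · refine le_trans ?_ le_sup_right
      calc X * L ^ n * X = X * X * L ^ n := by ring
        _ ≤ X * L * L ^ n := mul_le_mul' h le_rfl
        _ = X * L ^ (n + 1) := by ring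

/-- Two distinct classes on the same side `a` of the `i`-th coordinate: one of them may be
replaced by its pullback from the cube without coordinate `i`, because the extra term is
incomparable to the other class. -/
lemma pull_mul_pull_mem_of_ne
    (h1 : ∀ u w : Cube ι, ¬ (u ≤ w ∨ w ≤ u) → c u * c w = 0)
    {S : Finset ι} {i : ι} (hi : i ∉ S) (v : Cube ι) {t r : Cube ι}
    (ht : t i ≠ v i) (hr : r i ≠ v i) (htr : t ≠ r) :
    pull c (insert i S) t * pull c (insert i S) r ∈
      Submodule.span ℤ (pull c (insert i S) '' {u | u i ≠ v i}) *
        Submodule.span ℤ (Set.range (pull c S)) := by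
  by_cases hc : t ≤ r ∨ r ≤ t
  swap
  · rw [pull_mul_pull_eq_zero c h1 _ hc]; exact Submodule.zero_mem _
  wlog hle : t ≤ r generalizing t r
  · rw [mul_comm (pull c (insert i S) t)]
    exact this hr ht htr.symm hc.symm (hc.resolve_left hle)
  have heq : t i = r i := by
    have three : ∀ a b e : Fin 2, a ≠ e → b ≠ e → a = b := by decide
    exact three _ _ _ ht hr
  have two : ∀ a : Fin 2, a = 0 ∨ a = 1 := by decide
  have hswap : ∀ x y : Cube ι, ¬ (x ≤ Function.update y i (1 - y i) ∨
        Function.update y i (1 - y i) ≤ x) → x i ≠ v i →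
      pull c (insert i S) x * pull c (insert i S) y ∈
      Submodule.span ℤ (pull c (insert i S) '' {u | u i ≠ v i}) *
        Submodule.span ℤ (Set.range (pull c S)) := by
    intro x y hxy hx
    have e : pull c (insert i S) x * pull c (insert i S) y =
        pull c (insert i S) x * pull c S (Function.update y i 0) := by
      rw [pull_update c hi, mul_add, pull_mul_pull_eq_zero c h1 _ hxy, add_zero]
    rw [e]
    exact Submodule.mul_mem_mul (Submodule.subset_span ⟨x, hx, rfl⟩)
      (Submodule.subset_span ⟨_, rfl⟩)
  rcases two (t i) with h0 | h0
  · rw [mul_comm (pull c (insert i S) t)]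
    refine hswap r t ?_ hr
    rintro (h | h)
    · refine htr (le_antisymm hle fun j => ?_)
      by_cases hj : j = i
      · subst hj; exact heq.ge
      · simpa [hj] using h j
    · have := h i
      rw [← heq, h0] at this
      simp at this
  · refine hswap t r ?_ ht
    rintro (h | h)
    · have := h i
      rw [← heq, h0] at this
      simp at this
    · refine htr (le_antisymm hle fun j => ?_)
      by_cases hj : j = i
      · subst hj; exact heq.ge
      · simpa [hj] using h j

/-- On the component `C_v`, a product of more than `|S|` divisors pulled back from the cube on the
coordinates `S` vanishes. The hypotheses are the relations (R1), (R2), (R3) restricted to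
`C_v`. -/
lemma span_pow_eq_bot (v : Cube ι)
    (h1 : ∀ u w : Cube ι, ¬ (u ≤ w ∨ w ≤ u) → c u * c w = 0)
    (h2 : ∑ u, c u = 0)
    (h3 : ∀ (w : Cube ι) (i : ι), w i ≠ v i →
      c w * ∑ u ∈ Finset.univ.filter (fun u : Cube ι => u i ≠ v i), c u = 0)
    (S : Finset ι) :
    Submodule.span ℤ (Set.range (pull c S)) ^ (S.card + 1) = ⊥ := by
  induction S using Finset.induction_on with
  | empty =>
    rw [Finset.card_empty, zero_add, pow_one, Submodule.span_eq_bot]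
    rintro _ ⟨u, rfl⟩
    unfold pull
    by_cases hu : u = 0
    · subst hu
      rw [Finset.filter_true_of_mem, h2]
      intro x _
      funext i
      simp [res]
    · rw [Finset.filter_false_of_mem, Finset.sum_empty]
      intro x _ hx
      refine hu ?_
      rw [← hx]
      funext i
      simp [res]
  | insert i S hi ih =>
    set L := Submodule.span ℤ (Set.range (pull c S)) with hL
    set X := Submodule.span ℤ (pull c (insert i S) '' {u | u i ≠ v i}) with hX
    have hle : Submodule.span ℤ (Set.range (pull c (insert i S))) ≤ L ⊔ X := by
      rw [Submodule.span_le]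
      rintro _ ⟨u, rfl⟩
      by_cases hu : u i = v i
      · have e : pull c (insert i S) u = pull c S (Function.update u i 0) -
            pull c (insert i S) (Function.update u i (1 - u i)) := by
          rw [pull_update c hi]; ring
        rw [e]
        have two : ∀ a : Fin 2, 1 - a ≠ a := by decide
        exact Submodule.sub_mem _ (Submodule.mem_sup_left (Submodule.subset_span ⟨_, rfl⟩))
          (Submodule.mem_sup_right (Submodule.subset_span ⟨_, by simp [hu, two], rfl⟩))
      · exact Submodule.mem_sup_right (Submodule.subset_span ⟨u, hu, rfl⟩)
    have hXX : X * X ≤ X * L := by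
      rw [hX, Submodule.span_mul_span, Submodule.span_le]
      rintro _ ⟨_, ⟨t, ht, rfl⟩, _, ⟨r, hr, rfl⟩, rfl⟩
      by_cases htr : t = r
      swap
      · exact pull_mul_pull_mem_of_ne c h1 hi v ht hr htr
      subst htr
      -- (R3) expresses the square of a class through its products with the other classes.
      have hD : ∑ u ∈ Finset.univ.filter (fun u : Cube ι => u i ≠ v i), c u =
          ∑ u ∈ Finset.univ.filter (fun u : Cube ι => u i ≠ v i), pull c (insert i S) u := by
        have := sum_mul_eq_sum_pull c (insert i S) (fun u => if u i ≠ v i then 1 else 0)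
          (fun x => by simp [res])
        simpa only [ite_smul, one_smul, zero_smul, ← Finset.sum_filter] using this
      have hz : pull c (insert i S) t *
          ∑ u ∈ Finset.univ.filter (fun u : Cube ι => u i ≠ v i), pull c (insert i S) u = 0 := by
        rw [← hD]
        conv_lhs => rw [pull, Finset.sum_mul]
        refine Finset.sum_eq_zero fun x hx => h3 x i ?_
        have hx2 := congrFun (Finset.mem_filter.1 hx).2 i
        have hx3 : x i = t i := by simpa [res] using hx2
        rw [hx3]; exact ht
      have htD : t ∈ Finset.univ.filter (fun u : Cube ι => u i ≠ v i) :=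
        Finset.mem_filter.2 ⟨Finset.mem_univ t, ht⟩
      rw [← Finset.add_sum_erase _ _ htD, mul_add, Finset.mul_sum] at hz
      change pull c (insert i S) t * pull c (insert i S) t ∈ X * L
      rw [eq_neg_of_add_eq_zero_left hz]
      refine Submodule.neg_mem _ (Submodule.sum_mem _ fun u hu => ?_)
      rw [Finset.mem_erase, Finset.mem_filter] at hu
      exact pull_mul_pull_mem_of_ne c h1 hi v ht hu.2.2 hu.1.symm
    rw [Finset.card_insert_of_notMem hi, eq_bot_iff]
    refine (pow_le_pow_left' hle _).trans ((sup_pow_le L X hXX _).trans ?_)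
    rw [pow_succ, ih]
    simp

/-- Elementwise form of `span_pow_eq_bot`. -/
lemma prod_eq_zero_of_card {κ : Type} (v : Cube ι)
    (h1 : ∀ u w : Cube ι, ¬ (u ≤ w ∨ w ≤ u) → c u * c w = 0)
    (h2 : ∑ u, c u = 0)
    (h3 : ∀ (w : Cube ι) (i : ι), w i ≠ v i →
      c w * ∑ u ∈ Finset.univ.filter (fun u : Cube ι => u i ≠ v i), c u = 0)
    (S : Finset ι) (A : Finset κ) (hA : S.card + 1 ≤ A.card) (f : κ → Cube ι → ℤ)
    (hf : ∀ a ∈ A, ∀ x, f a x = f a (res S x)) :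
    ∏ a ∈ A, ∑ x, (f a x : Q) * c x = 0 := by
  classical
  have hmem : ∀ a ∈ A, ∑ x, (f a x : Q) * c x ∈ Submodule.span ℤ (Set.range (pull c S)) := by
    intro a ha
    simp only [← zsmul_eq_mul]
    rw [sum_mul_eq_sum_pull c S _ (hf a ha)]
    exact Submodule.sum_mem _ fun u _ =>
      Submodule.smul_mem _ _ (Submodule.subset_span ⟨u, rfl⟩)
  have hprod : ∀ B ⊆ A, ∏ a ∈ B, ∑ x, (f a x : Q) * c x ∈
      Submodule.span ℤ (Set.range (pull c S)) ^ B.card := by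
    intro B
    induction B using Finset.induction_on with
    | empty =>
      intro _
      rw [Finset.prod_empty, Finset.card_empty, pow_zero]
      exact Submodule.one_le.1 le_rfl
    | insert b B hb ih =>
      intro hBA
      rw [Finset.prod_insert hb, Finset.card_insert_of_notMem hb, pow_succ']
      exact Submodule.mul_mem_mul (hmem b (hBA (Finset.mem_insert_self b B)))
        (ih ((Finset.subset_insert b B).trans hBA))
  have h := hprod A (Finset.Subset.refl A)
  obtain ⟨m, hm⟩ := Nat.exists_eq_add_of_le hA
  rwa [hm, pow_add, span_pow_eq_bot c v h1 h2 h3 S, Submodule.bot_mul, Submodule.mem_bot] at h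

/-! ### Vanishing of products of Fourier generators -/

/-- The ideal of polynomials vanishing on the component `C_v`: the annihilator of `C_v`
modulo `I_rat`. -/
noncomputable def annIdeal (v : Cube ι) : Ideal (MvPolynomial (Cube ι) ℤ) :=
  Submodule.comap (LinearMap.mulLeft (MvPolynomial (Cube ι) ℤ)
    (X v : MvPolynomial (Cube ι) ℤ)) (Irat ι)

lemma mem_annIdeal {v : Cube ι} {p : MvPolynomial (Cube ι) ℤ} :
    p ∈ annIdeal v ↔ X v * p ∈ Irat ι := Iff.rfl

lemma ip_res (S : Finset ι) (w : Cube ι) (hw : ∀ l, l ∉ S → w l = 0) (x : Cube ι) :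
    ip ι x w = ip ι (res S x) w := by
  unfold ip
  refine Finset.sum_congr rfl fun l _ => ?_
  by_cases hl : l ∈ S
  · simp [res, hl]
  · simp [hw l hl]

lemma prod_F_mem_annIdeal {κ : Type} (v : Cube ι) (S : Finset ι) (A : Finset κ) (w : κ → Cube ι)
    (hw : ∀ a ∈ A, ∀ l, l ∉ S → w a l = 0) (hA : S.card + 1 ≤ A.card) :
    ∏ a ∈ A, F ι (w a) ∈ annIdeal v := by
  classical
  let q := Ideal.Quotient.mk (annIdeal v)
  let c : Cube ι → MvPolynomial (Cube ι) ℤ ⧸ annIdeal v := fun u => q (X u)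
  have hzero := prod_eq_zero_of_card c v ?_ ?_ ?_ S A hA (fun a x => (-1) ^ ip ι x (w a))
    (fun a ha x => by rw [ip_res S (w a) (hw a ha)])
  · refine Ideal.Quotient.eq_zero_iff_mem.1 ?_
    rw [map_prod, ← hzero]
    refine Finset.prod_congr rfl fun a _ => ?_
    unfold F
    rw [map_sum]
    refine Finset.sum_congr rfl fun x _ => ?_
    simp [c, q]
  · intro u z huz
    change q (X u) * q (X z) = 0
    rw [← map_mul]
    refine Ideal.Quotient.eq_zero_iff_mem.2 (mem_annIdeal.2 (Ideal.mul_mem_left _ _ ?_))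
    exact Ideal.subset_span (Or.inl (Or.inl ⟨[u, z], by simpa using huz, by simp⟩))
  · change ∑ u, q (X u) = 0
    rw [← map_sum]
    refine Ideal.Quotient.eq_zero_iff_mem.2 (mem_annIdeal.2 ?_)
    exact Ideal.subset_span (Or.inl (Or.inr ⟨v, rfl⟩))
  · intro z i hz
    change q (X z) * ∑ u ∈ _, q (X u) = 0
    rw [← map_sum, ← map_mul]
    refine Ideal.Quotient.eq_zero_iff_mem.2 (mem_annIdeal.2 ?_)
    refine Ideal.subset_span (Or.inr ⟨z, v, i, hz, ?_⟩)
    have two : ∀ a b e : Fin 2, b ≠ e → (a ≠ e ↔ a = b) := by decide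
    have e : (Finset.univ.filter fun u : Cube ι => u i ≠ v i) =
        Finset.univ.filter fun u : Cube ι => u i = z i :=
      Finset.filter_congr fun u _ => two _ _ _ hz
    rw [e]
    ring

/-- One arbitrary Fourier generator kills more than `|S|` generators supported in `S`. -/
lemma F_mul_prod_F_mem {κ : Type} (w₀ : Cube ι) (S : Finset ι) (A : Finset κ) (w : κ → Cube ι)
    (hw : ∀ a ∈ A, ∀ l, l ∉ S → w a l = 0) (hA : S.card + 1 ≤ A.card) :
    F ι w₀ * ∏ a ∈ A, F ι (w a) ∈ Irat ι := by
  rw [show F ι w₀ = ∑ v, MvPolynomial.C ((-1 : ℤ) ^ ip ι v w₀) * X v from rfl, Finset.sum_mul]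
  refine Ideal.sum_mem _ fun v _ => ?_
  rw [mul_assoc]
  exact Ideal.mul_mem_left _ _ (mem_annIdeal.1 (prod_F_mem_annIdeal v S A w hw hA))

end Vanishing

end ChowCube

/-- **Vanishing theorem** (Theorem 1.6): for `w_0, …, w_d ∈ 𝔽_2^d` and a partition
`𝒫 = {P_1,…,P_k}` of `{1,…,d}` into `k` non-empty blocks, if
`Σ_{i=0}^d α(w_i, 𝒫) < d + k` — where `α(w, 𝒫)` is the number of blocks meeting the
support of `w` — then `F_{w_0}⋯F_{w_d} = 0` in `Chow(□^d)[1/2]`, i.e. the product lies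
in the extension of `I_rat(□^d)` to `ℤ[1/2][C_v]`. -/
theorem ChowCube.fourier_vanishing
    (d : ℕ) (hd : 1 ≤ d) (k : ℕ)
    (P : Fin k → Finset (Fin d))
    (hPne : ∀ j, (P j).Nonempty)
    (hPdisj : ∀ j j', j ≠ j' → Disjoint (P j) (P j'))
    (hPcover : ∀ l : Fin d, ∃ j, l ∈ P j)
    (w : Fin (d + 1) → ChowCube.Cube (Fin d))
    (hα : ∑ i, (Finset.univ.filter
        (fun j : Fin k => ∃ l ∈ P j, w i l = 1)).card < d + k) :
    (∏ i, ChowCube.toHalf (Fin d) (ChowCube.F (Fin d) (w i))) ∈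
      Ideal.map (ChowCube.toHalf (Fin d)) (ChowCube.Irat (Fin d)) := by
  rw [← map_prod]
  refine Ideal.mem_map_of_mem _ ?_
  have hsum : ∑ j, (P j).card = d := by
    rw [← Finset.card_biUnion fun a _ b _ hab => hPdisj a b hab]
    have : Finset.univ.biUnion P = Finset.univ := by
      ext l; simpa using hPcover l
    rw [this, Finset.card_univ, Fintype.card_fin]
  obtain ⟨j, hj⟩ : ∃ j, (Finset.univ.filter fun i => ∃ l ∈ P j, w i l = 1).card ≤ (P j).card := by
    by_contra! hcon
    have h1 : ∑ j, ((P j).card + 1) ≤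
        ∑ j, (Finset.univ.filter fun i => ∃ l ∈ P j, w i l = 1).card :=
      Finset.sum_le_sum fun j _ => hcon j
    rw [Finset.sum_add_distrib, hsum] at h1
    simp only [Finset.card_filter] at h1 hα
    rw [Finset.sum_comm] at h1
    simp only [Finset.sum_const, Finset.card_univ, Fintype.card_fin, smul_eq_mul, mul_one] at h1
    omega
  have hsplit := Finset.card_filter_add_card_filter_not
    (s := (Finset.univ : Finset (Fin (d + 1)))) (fun i => ∃ l ∈ P j, w i l = 1)
  rw [Finset.card_univ, Fintype.card_fin] at hsplit
  set N := Finset.univ.filter fun i => ∃ l ∈ P j, w i l = 1 with hN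
  set A := Finset.univ.filter fun i => ¬ ∃ l ∈ P j, w i l = 1 with hA
  have hcompl : ((P j)ᶜ).card + (P j).card = d := by
    rw [Finset.card_compl_add_card, Fintype.card_fin]
  have hpos := (hPne j).card_pos
  -- If no `w i` meets the block, the extra factor is split off from `A` itself.
  obtain ⟨i₀, hi₀⟩ : ∃ i₀, ((P j)ᶜ).card + 1 ≤ (A.erase i₀).card := by
    rcases N.eq_empty_or_nonempty with h0 | ⟨i₀, hi₀⟩
    · rw [h0, Finset.card_empty] at hsplit
      refine ⟨0, ?_⟩
      have := Finset.pred_card_le_card_erase (s := A) (a := 0)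
      omega
    · refine ⟨i₀, ?_⟩
      rw [Finset.erase_eq_of_notMem]
      · omega
      · intro h
        exact (Finset.mem_filter.1 h).2 (Finset.mem_filter.1 hi₀).2
  have hmem := ChowCube.F_mul_prod_F_mem (w i₀) (P j)ᶜ (A.erase i₀) w ?_ hi₀
  · rw [← Finset.prod_insert (f := fun i => ChowCube.F (Fin d) (w i))
      (Finset.notMem_erase i₀ A)] at hmem
    exact Ideal.mem_of_dvd _
      (Finset.prod_dvd_prod_of_subset _ _ _ (Finset.subset_univ _)) hmem
  · intro i hi l hl
    have h := (Finset.mem_filter.1 (Finset.mem_of_mem_erase hi)).2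
    have two : ∀ a : Fin 2, a ≠ 1 → a = 0 := by decide
    exact two _ fun h1 => h ⟨l, by simpa using hl, h1⟩
end

section
/- Let d ≥ 1 and let r ≥ 0 be an integer. Identify {0,1}^d with 𝔽_2^d and set F_w = Σ_{v∈𝔽_2^d} (−1)^{⟨v,w⟩} C_v with ⟨v,w⟩ = Σ_i v_i w_i ∈ 𝔽_2. Let V_1 ⊆ {1,…,d} be a subset of size r, and let w_0, w_1, …, w_r ∈ 𝔽_2^d be r+1 elements (not necessarily distinct) whose supports are all contained in V_1. Then for every v ∈ 𝔽_2^d, the product F_{w_0} F_{w_1} ⋯ F_{w_r} · F_v is zero in the localized Chow ring Chow(□^d)[1/2]. -/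
/-!
The vanishing already holds integrally. Write `V = V_1` and, for `D ⊆ V`, let `G_D` be the sum of
all `C_u` with `supp u ∩ V = D`. If `supp w ⊆ V`, the sign `(-1)^⟨u,w⟩` depends only on
`supp u ∩ V`, so `F_w` is an integral combination of the `G_D`. Hence it suffices to show that
`C_v · G_{D_0} ⋯ G_{D_r} = 0` in `Chow(□^d)` for all `v` and all `D_0, …, D_r ⊆ V`
(`vert_mul_prod_layer`).

Call `supp v ∩ V, D_0, …, D_r` the labels of this product. If two labels are incomparable, it
vanishes by (R1). Otherwise the `r + 2` labels form a chain of subsets of the `r`-element set `V`,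
so one is repeated, and the product is `M · G_c` with `c` in the set `T` of labels of
`M = C_v · ∏ G_D`. Argue by induction on the number of missing labels: `M · G_D = 0`
for every `D ∉ T`, as this product has one more label. If `c` has a successor `c⁺` in the chain `T`
and `i ∈ c⁺ \ c`, then (R3) gives `M · ∑_{i ∉ D} G_D = 0`, that is
`∑_{D ∈ T, D ⊆ c} M · G_D = 0`; if `c` is the top of `T`, this follows from (R2). Dually,
`∑_{D ∈ T, c ⊆ D} M · G_D = 0`. Adding these and subtracting `∑_{D ∈ T} M · G_D = 0`
leaves `M · G_c = 0`.
-/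

open MvPolynomial

namespace ChowCube

section Vanishing

variable {ι : Type} [Fintype ι] [DecidableEq ι]

/-- The class of the generator `C_u` in the Chow ring. -/
noncomputable def vert (u : Cube ι) : Chow ι := mk ι (X u)

/-- The class of `G_D`, the sum of the `C_u` over the vertices `u` with `supp u ∩ V = D`: the
pullback of a vertex of the face `{0,1}^V` under the coordinate projection. -/
noncomputable def layer (V D : Finset ι) : Chow ι :=
  ∑ u : Cube ι with supp u ∩ V = D, vert u

lemma mk_eq_zero {p : MvPolynomial (Cube ι) ℤ} (hp : p ∈ Irat ι) : mk ι p = 0 :=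
  Ideal.Quotient.eq_zero_iff_mem.mpr hp

lemma mem_supp {u : Cube ι} {i : ι} : i ∈ supp u ↔ u i = 1 := by simp [supp]

lemma fin_two_ne_one {a : Fin 2} : a ≠ 1 ↔ a = 0 := by omega

lemma supp_mono {u w : Cube ι} (h : u ≤ w) : supp u ⊆ supp w := by
  intro i hi
  have hle := h i
  rw [mem_supp] at hi ⊢
  exact le_antisymm (Fin.le_last _) (hi ▸ hle)

lemma vert_mul_vert {u w : Cube ι} (h1 : ¬ u ≤ w) (h2 : ¬ w ≤ u) : vert u * vert w = 0 := by
  rw [vert, vert, ← map_mul]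
  refine mk_eq_zero (Ideal.subset_span (Or.inl (Or.inl ⟨[u, w], ?_, ?_⟩)))
  · simp [h1, h2]
  · simp

lemma vert_mul_sum (u : Cube ι) : vert u * ∑ v : Cube ι, vert v = 0 := by
  simp only [vert, ← map_sum, ← map_mul]
  exact mk_eq_zero (Ideal.subset_span (Or.inl (Or.inr ⟨u, rfl⟩)))

lemma vert_mul_vert_mul_sum {u w : Cube ι} {i : ι} (h : u i ≠ w i) :
    vert u * vert w * ∑ v : Cube ι with v i = u i, vert v = 0 := by
  simp only [vert, ← map_sum, ← map_mul]
  exact mk_eq_zero (Ideal.subset_span (Or.inr ⟨u, w, i, h, rfl⟩))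

lemma sum_layer (V : Finset ι) (p : Finset ι → Prop) [DecidablePred p] :
    ∑ D ∈ V.powerset with p D, layer V D = ∑ u : Cube ι with p (supp u ∩ V), vert u := by
  rw [← Finset.sum_fiberwise_of_maps_to (s := Finset.univ.filter fun u : Cube ι => p (supp u ∩ V))
    (t := V.powerset.filter p) (g := fun u => supp u ∩ V)]
  · refine Finset.sum_congr rfl fun D hD => ?_
    rw [Finset.mem_filter] at hD
    rw [layer, Finset.filter_filter]
    refine Finset.sum_congr (Finset.filter_congr fun u _ => ?_) fun _ _ => rfl
    constructor
    · rintro rfl; exact ⟨hD.2, rfl⟩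
    · exact fun h => h.2
  · intro u hu
    simp only [Finset.mem_filter, Finset.mem_univ, true_and] at hu
    simp [hu]

/-- Two distinct labels of a product `C_v · ∏ G_D` come from two different factors, so such a
product times `K` vanishes as soon as `C_u C_w K = 0` for all `u`, `w` with these labels. -/
lemma mul_eq_zero_of_labels {V : Finset ι} {v : Cube ι} {m : Multiset (Finset ι)}
    {A B : Finset ι} (hA : A ∈ (supp v ∩ V) ::ₘ m) (hB : B ∈ (supp v ∩ V) ::ₘ m) (hAB : A ≠ B)
    {K : Chow ι}
    (h : ∀ u w : Cube ι, supp u ∩ V = A → supp w ∩ V = B → vert u * vert w * K = 0) :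
    vert v * (m.map (layer V)).prod * K = 0 := by
  have one : ∀ u : Cube ι, supp u ∩ V = A → vert u * layer V B * K = 0 := by
    intro u hu
    rw [layer, Finset.mul_sum, Finset.sum_mul]
    exact Finset.sum_eq_zero fun w hw => h u w hu (by simpa using hw)
  have two : ∀ w : Cube ι, supp w ∩ V = B → layer V A * vert w * K = 0 := by
    intro w hw
    rw [layer, Finset.sum_mul, Finset.sum_mul]
    exact Finset.sum_eq_zero fun u hu => h u w (by simpa using hu) hw
  have both : layer V A * layer V B * K = 0 := by
    rw [layer, Finset.sum_mul, Finset.sum_mul]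
    exact Finset.sum_eq_zero fun u hu => one u (by simpa using hu)
  rcases Multiset.mem_cons.mp hA with hAv | hAm <;>
    rcases Multiset.mem_cons.mp hB with hBv | hBm
  · exact absurd (hAv.trans hBv.symm) hAB
  · obtain ⟨m', rfl⟩ := Multiset.exists_cons_of_mem hBm
    rw [Multiset.map_cons, Multiset.prod_cons]
    linear_combination (m'.map (layer V)).prod * one v hAv.symm
  · obtain ⟨m', rfl⟩ := Multiset.exists_cons_of_mem hAm
    rw [Multiset.map_cons, Multiset.prod_cons]
    linear_combination (m'.map (layer V)).prod * two v hBv.symm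
  · obtain ⟨m', rfl⟩ := Multiset.exists_cons_of_mem hAm
    obtain ⟨m'', rfl⟩ := Multiset.exists_cons_of_mem
      ((Multiset.mem_cons.mp hBm).resolve_left (Ne.symm hAB))
    simp only [Multiset.map_cons, Multiset.prod_cons]
    linear_combination vert v * (m''.map (layer V)).prod * both

lemma mul_eq_zero_of_incomparable {V : Finset ι} {v : Cube ι} {m : Multiset (Finset ι)}
    {A B : Finset ι} (hA : A ∈ (supp v ∩ V) ::ₘ m) (hB : B ∈ (supp v ∩ V) ::ₘ m)
    (h1 : ¬ A ⊆ B) (h2 : ¬ B ⊆ A) :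
    vert v * (m.map (layer V)).prod = 0 := by
  rw [← mul_one (vert v * _)]
  refine mul_eq_zero_of_labels hA hB (fun h => h1 h.subset) fun u w hu hw => ?_
  subst hu hw
  rw [mul_one]
  exact vert_mul_vert (fun h => h1 (Finset.inter_subset_inter_right (supp_mono h)))
    fun h => h2 (Finset.inter_subset_inter_right (supp_mono h))

lemma mul_sum_layer_eq_zero (V : Finset ι) (v : Cube ι) (P : Chow ι) :
    vert v * P * ∑ D ∈ V.powerset, layer V D = 0 := by
  have h := sum_layer V fun _ => True
  simp only [Finset.filter_true] at h
  rw [h]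
  linear_combination P * vert_mul_sum v

/-- The relation (R3) for a product `C_v · ∏ G_D` with labels `A ∌ i` and `B ∋ i`. -/
lemma mul_sum_layer_mem_eq_zero {V : Finset ι} {v : Cube ι} {m : Multiset (Finset ι)}
    {A B : Finset ι} (hA : A ∈ (supp v ∩ V) ::ₘ m) (hB : B ∈ (supp v ∩ V) ::ₘ m) {i : ι}
    (hiV : i ∈ V) (hiA : i ∉ A) (hiB : i ∈ B) :
    vert v * (m.map (layer V)).prod * ∑ D ∈ V.powerset with i ∈ D, layer V D = 0 ∧
    vert v * (m.map (layer V)).prod * ∑ D ∈ V.powerset with i ∉ D, layer V D = 0 := by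
  have hAB : A ≠ B := fun h => hiA (h ▸ hiB)
  have key : ∀ u w : Cube ι, supp u ∩ V = A → supp w ∩ V = B → u i = 0 ∧ w i = 1 := by
    rintro u w rfl rfl
    simp only [Finset.mem_inter, hiV, and_true, mem_supp] at hiA hiB
    exact ⟨fin_two_ne_one.mp hiA, hiB⟩
  constructor
  · refine mul_eq_zero_of_labels hA hB hAB fun u w hu hw => ?_
    obtain ⟨h0, h1⟩ := key u w hu hw
    have h := vert_mul_vert_mul_sum (u := w) (w := u) (i := i) (by simp [h0, h1])
    rw [h1] at h
    rw [sum_layer]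
    simp only [Finset.mem_inter, hiV, and_true, mem_supp]
    linear_combination h
  · refine mul_eq_zero_of_labels hA hB hAB fun u w hu hw => ?_
    obtain ⟨h0, h1⟩ := key u w hu hw
    have h := vert_mul_vert_mul_sum (u := u) (w := w) (i := i) (by simp [h0, h1])
    rw [h0] at h
    rw [sum_layer]
    simpa only [Finset.mem_inter, hiV, and_true, mem_supp, ← ne_eq, fin_two_ne_one] using h

/-- In a finite chain, the members not contained in `c` are either absent or exactly those
containing some fixed `i ∉ c`; here `i` is any element of `e \ c`, with `e` the smallest such
member (the successor of `c`, if `c` lies in the chain). -/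
lemma exists_separating_above {α : Type*} [DecidableEq α] {T : Finset (Finset α)}
    (hT : ∀ A ∈ T, ∀ B ∈ T, A ⊆ B ∨ B ⊆ A) (c : Finset α) :
    (∀ b ∈ T, b ⊆ c) ∨ ∃ i ∉ c, ∃ e ∈ T, i ∈ e ∧ ∀ b ∈ T, i ∉ b ↔ b ⊆ c := by
  by_cases hne : (T.filter fun b => ¬ b ⊆ c).Nonempty
  · obtain ⟨e, he, hmin⟩ := Finset.exists_min_image _ Finset.card hne
    simp only [Finset.mem_filter] at he hmin
    obtain ⟨i, hie, hic⟩ := Finset.not_subset.mp he.2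
    refine Or.inr ⟨i, hic, e, he.1, hie, fun b hb => ⟨fun hib => ?_, fun h hib => hic (h hib)⟩⟩
    by_contra hbc
    rcases hT e he.1 b hb with h | h
    · exact hib (h hie)
    · exact hib (Finset.eq_of_subset_of_card_le h (hmin b ⟨hb, hbc⟩) ▸ hie)
  · left
    simpa [Finset.not_nonempty_iff_eq_empty, Finset.filter_eq_empty_iff] using hne

/-- The order dual of `exists_separating_above`, with the predecessor in place of the successor. -/
lemma exists_separating_below {α : Type*} [DecidableEq α] {T : Finset (Finset α)}
    (hT : ∀ A ∈ T, ∀ B ∈ T, A ⊆ B ∨ B ⊆ A) (c : Finset α) :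
    (∀ b ∈ T, c ⊆ b) ∨ ∃ i ∈ c, ∃ e ∈ T, i ∉ e ∧ ∀ b ∈ T, i ∈ b ↔ c ⊆ b := by
  by_cases hne : (T.filter fun b => ¬ c ⊆ b).Nonempty
  · obtain ⟨e, he, hmax⟩ := Finset.exists_max_image _ Finset.card hne
    simp only [Finset.mem_filter] at he hmax
    obtain ⟨i, hic, hie⟩ := Finset.not_subset.mp he.2
    refine Or.inr ⟨i, hic, e, he.1, hie, fun b hb => ⟨fun hib => ?_, fun h => h hic⟩⟩
    by_contra hbc
    rcases hT e he.1 b hb with h | h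
    · exact hie ((Finset.eq_of_subset_of_card_le h (hmax b ⟨hb, hbc⟩)).symm ▸ hib)
    · exact hie (h hib)
  · left
    simpa [Finset.not_nonempty_iff_eq_empty, Finset.filter_eq_empty_iff] using hne

/-- The inductive step: if all products with one more label vanish, then so does the product with
a repeated label `c`. -/
lemma mul_layer_eq_zero_of_repeated {V : Finset ι} {v : Cube ι} {m : Multiset (Finset ι)}
    (hm : ∀ D ∈ m, D ⊆ V)
    (hchain : ∀ A ∈ (supp v ∩ V) ::ₘ m, ∀ B ∈ (supp v ∩ V) ::ₘ m, A ⊆ B ∨ B ⊆ A)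
    (hnew : ∀ D ⊆ V, D ∉ (supp v ∩ V) ::ₘ m →
      vert v * (m.map (layer V)).prod * layer V D = 0)
    {c : Finset ι} (hc : c ∈ (supp v ∩ V) ::ₘ m) :
    vert v * (m.map (layer V)).prod * layer V c = 0 := by
  set M := vert v * (m.map (layer V)).prod with hM
  set T : Finset (Finset ι) := ((supp v ∩ V) ::ₘ m).toFinset with hTdef
  have memT : ∀ {D}, D ∈ T ↔ D ∈ (supp v ∩ V) ::ₘ m := by simp [hTdef]
  have subV : ∀ D ∈ T, D ⊆ V := by
    intro D hD
    rcases Multiset.mem_cons.mp (memT.mp hD) with rfl | h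
    · exact Finset.inter_subset_right
    · exact hm D h
  have hT : ∀ A ∈ T, ∀ B ∈ T, A ⊆ B ∨ B ⊆ A := fun A hA B hB =>
    hchain A (memT.mp hA) B (memT.mp hB)
  have hcT : c ∈ T := memT.mpr hc
  have restrict : ∀ (p : Finset ι → Prop) [DecidablePred p],
      M * ∑ D ∈ V.powerset with p D, layer V D = ∑ D ∈ T with p D, M * layer V D := by
    intro p _
    rw [Finset.mul_sum]
    symm
    refine Finset.sum_subset (fun D hD => ?_) fun D hD hD' => ?_
    · rw [Finset.mem_filter] at hD ⊢
      exact ⟨Finset.mem_powerset.mpr (subV D hD.1), hD.2⟩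
    · simp only [Finset.mem_filter, Finset.mem_powerset] at hD hD'
      exact hnew D hD.1 fun h => hD' ⟨memT.mpr h, hD.2⟩
  have all : ∑ D ∈ T, M * layer V D = 0 := by
    have h := restrict fun _ => True
    simp only [Finset.filter_true] at h
    rw [← h, hM, mul_sum_layer_eq_zero]
  have lower : ∑ D ∈ T with D ⊆ c, M * layer V D = 0 := by
    rcases exists_separating_above hT c with h | ⟨i, hic, e, he, hie, h⟩
    · rwa [Finset.filter_true_of_mem h]
    · rw [← Finset.filter_congr h, ← restrict]
      exact (mul_sum_layer_mem_eq_zero hc (memT.mp he) (subV e he hie) hic hie).2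
  have upper : ∑ D ∈ T with c ⊆ D, M * layer V D = 0 := by
    rcases exists_separating_below hT c with h | ⟨i, hic, e, he, hie, h⟩
    · rwa [Finset.filter_true_of_mem h]
    · rw [← Finset.filter_congr h, ← restrict]
      exact (mul_sum_layer_mem_eq_zero (memT.mp he) hc (subV c hcT hic) hie hic).1
  -- The down-set and the up-set of `c` cover the chain `T` and meet only in `c`.
  have hunion : (T.filter fun D => D ⊆ c) ∪ (T.filter fun D => c ⊆ D) = T := by
    rw [← Finset.filter_or]
    exact Finset.filter_true_of_mem fun D hD => hT D hD c hcT
  have hinter : (T.filter fun D => D ⊆ c) ∩ (T.filter fun D => c ⊆ D) = {c} := by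
    ext D
    simp only [Finset.mem_inter, Finset.mem_filter, Finset.mem_singleton]
    constructor
    · rintro ⟨⟨-, h1⟩, -, h2⟩
      exact h1.antisymm h2
    · rintro rfl
      simp [hcT]
  have h := Finset.sum_union_inter (s₁ := T.filter fun D => D ⊆ c)
    (s₂ := T.filter fun D => c ⊆ D) (f := fun D => M * layer V D)
  rw [hunion, hinter, all, lower, upper, Finset.sum_singleton] at h
  simpa using h

/-- The cardinality is injective on a chain of subsets of `V`, with values in `{0, …, |V|}`. -/
lemma card_chain_le {α : Type*} [DecidableEq α] {V : Finset α} {T : Finset (Finset α)}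
    (hV : ∀ A ∈ T, A ⊆ V) (hT : ∀ A ∈ T, ∀ B ∈ T, A ⊆ B ∨ B ⊆ A) :
    T.card ≤ V.card + 1 := by
  rw [← Finset.card_range (V.card + 1)]
  refine Finset.card_le_card_of_injOn Finset.card (fun A hA => ?_) fun A hA B hB h => ?_
  · simpa [Nat.lt_succ_iff] using Finset.card_le_card (hV A hA)
  · rcases hT A hA B hB with h' | h'
    · exact Finset.eq_of_subset_of_card_le h' h.ge
    · exact (Finset.eq_of_subset_of_card_le h' h.le).symm

/-- The integral vanishing `C_v · G_{D_0} ⋯ G_{D_r} = 0`, where `r = |V|`. -/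
theorem vert_mul_prod_layer {V : Finset ι} (v : Cube ι) (m : Multiset (Finset ι))
    (hm : ∀ D ∈ m, D ⊆ V) (hcard : m.card = V.card + 1) :
    vert v * (m.map (layer V)).prod = 0 := by
  -- Induct on the number of subsets of `V` which are not labels of the product.
  induction hn : (V.powerset \ ((supp v ∩ V) ::ₘ m).toFinset).card using Nat.strong_induction_on
    generalizing m with
  | _ n ih =>
    by_cases hchain : ∀ A ∈ (supp v ∩ V) ::ₘ m, ∀ B ∈ (supp v ∩ V) ::ₘ m, A ⊆ B ∨ B ⊆ A
    swap
    · push Not at hchain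
      obtain ⟨A, hA, B, hB, h1, h2⟩ := hchain
      exact mul_eq_zero_of_incomparable hA hB h1 h2
    have hdup : ¬ ((supp v ∩ V) ::ₘ m).Nodup := by
      intro hnd
      have h := card_chain_le (V := V) (T := ((supp v ∩ V) ::ₘ m).toFinset)
        (fun A hA => by
          rcases Multiset.mem_cons.mp (Multiset.mem_toFinset.mp hA) with rfl | h
          · exact Finset.inter_subset_right
          · exact hm A h)
        (fun A hA B hB => hchain A (Multiset.mem_toFinset.mp hA) B (Multiset.mem_toFinset.mp hB))
      rw [Multiset.toFinset_card_of_nodup hnd, Multiset.card_cons] at h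
      omega
    -- A repeated label can be removed from `m`, whether or not it is the label of `v`.
    obtain ⟨c, m', rfl, hc⟩ : ∃ c m', m = c ::ₘ m' ∧ c ∈ (supp v ∩ V) ::ₘ m' := by
      by_cases hv : supp v ∩ V ∈ m
      · obtain ⟨m', rfl⟩ := Multiset.exists_cons_of_mem hv
        exact ⟨_, m', rfl, Multiset.mem_cons_self _ _⟩
      · have hnd : ¬ m.Nodup := fun h => hdup (Multiset.nodup_cons.mpr ⟨hv, h⟩)
        rw [Multiset.nodup_iff_le] at hnd
        push Not at hnd
        obtain ⟨c, hc⟩ := hnd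
        obtain ⟨m', rfl⟩ := Multiset.le_iff_exists_add.mp hc
        exact ⟨c, c ::ₘ m', by simp, by simp⟩
    have hm' : ∀ D ∈ m', D ⊆ V := fun D hD => hm D (Multiset.mem_cons_of_mem hD)
    have hsub : ∀ A ∈ (supp v ∩ V) ::ₘ m', A ∈ (supp v ∩ V) ::ₘ c ::ₘ m' := by
      intro A hA
      simp only [Multiset.mem_cons] at hA ⊢
      tauto
    rw [Multiset.map_cons, Multiset.prod_cons, mul_comm (layer V c), ← mul_assoc]
    refine mul_layer_eq_zero_of_repeated hm'
      (fun A hA B hB => hchain A (hsub A hA) B (hsub B hB)) (fun D hD hDm => ?_) hc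
    have h := ih _ ?_ (D ::ₘ m') ?_ ?_ rfl
    · rwa [Multiset.map_cons, Multiset.prod_cons, mul_comm (layer V D), ← mul_assoc] at h
    · rw [← hn]
      refine Finset.card_lt_card (Finset.ssubset_iff_of_subset ?_ |>.mpr ⟨D, ?_, ?_⟩)
      · intro E hE
        simp only [Finset.mem_sdiff, Multiset.mem_toFinset, Multiset.mem_cons] at hE hc ⊢
        refine ⟨hE.1, ?_⟩
        rintro (h | rfl | h)
        · tauto
        · tauto
        · tauto
      · simp only [Finset.mem_sdiff, Multiset.mem_toFinset, Multiset.mem_cons,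
          Finset.mem_powerset] at hDm hc ⊢
        refine ⟨hD, ?_⟩
        rintro (h | rfl | h) <;> tauto
      · simp
    · intro E hE
      rcases Multiset.mem_cons.mp hE with rfl | h
      · exact hD
      · exact hm' E h
    · simpa using hcard

lemma ip_eq_card (u w : Cube ι) : ip ι u w = (supp u ∩ supp w).card := by
  rw [ip, supp, supp, ← Finset.filter_and, Finset.card_filter]
  refine Finset.sum_congr rfl fun i _ => ?_
  generalize u i = a
  generalize w i = b
  revert a b
  decide

lemma mk_F (w : Cube ι) : mk ι (F ι w) = ∑ u : Cube ι, ((-1 : ℤ) ^ ip ι u w) • vert u := by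
  simp only [F, map_sum, vert, ← map_smul, MvPolynomial.smul_eq_C_mul]

/-- If `supp w ⊆ V`, then `F_w` is a combination of the `G_D` with `D ⊆ V`. -/
lemma mk_F_eq_sum_layer {V : Finset ι} {w : Cube ι} (hw : supp w ⊆ V) :
    mk ι (F ι w) = ∑ D ∈ V.powerset, ((-1 : ℤ) ^ (D ∩ supp w).card) • layer V D := by
  rw [mk_F, ← Finset.sum_fiberwise_of_maps_to (t := V.powerset) (g := fun u => supp u ∩ V)
    (fun u _ => Finset.mem_powerset.mpr Finset.inter_subset_right)]
  refine Finset.sum_congr rfl fun D _ => ?_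
  rw [layer, Finset.smul_sum]
  refine Finset.sum_congr rfl fun u hu => ?_
  rw [Finset.mem_filter] at hu
  rw [ip_eq_card, ← hu.2, Finset.inter_assoc, Finset.inter_eq_right.mpr hw]

end Vanishing

end ChowCube

/-- **Proposition 5.4**: if `w_0, …, w_r ∈ 𝔽_2^d` all have support contained in a subset
`V_1 ⊆ {1,…,d}` of size `r`, then for every `v ∈ 𝔽_2^d` the product
`F_{w_0}⋯F_{w_r}·F_v` vanishes in `Chow(□^d)[1/2]`, i.e. it lies in the extension of
`I_rat(□^d)` to `ℤ[1/2][C_v]`. -/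
theorem ChowCube.fourier_vanishing_support
    (d : ℕ) (hd : 1 ≤ d) (r : ℕ)
    (V1 : Finset (Fin d)) (hV1 : V1.card = r)
    (w : Fin (r + 1) → ChowCube.Cube (Fin d))
    (hw : ∀ i, ChowCube.supp (w i) ⊆ V1)
    (v : ChowCube.Cube (Fin d)) :
    ((∏ i, ChowCube.toHalf (Fin d) (ChowCube.F (Fin d) (w i))) *
        ChowCube.toHalf (Fin d) (ChowCube.F (Fin d) v)) ∈
      Ideal.map (ChowCube.toHalf (Fin d)) (ChowCube.Irat (Fin d)) := by
  rw [← map_prod, ← map_mul]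
  refine Ideal.mem_map_of_mem _ ?_
  rw [← Ideal.Quotient.eq_zero_iff_mem]
  change ChowCube.mk (Fin d) _ = 0
  rw [map_mul, map_prod, ChowCube.mk_F]
  simp only [ChowCube.mk_F_eq_sum_layer (hw _)]
  rw [Finset.prod_univ_sum, Finset.sum_mul]
  refine Finset.sum_eq_zero fun D hD => ?_
  rw [Fintype.mem_piFinset] at hD
  rw [Finset.mul_sum]
  refine Finset.sum_eq_zero fun u _ => ?_
  have h := ChowCube.vert_mul_prod_layer (V := V1) u (Finset.univ.val.map D)
    (fun E hE => by
      obtain ⟨i, -, rfl⟩ := Multiset.mem_map.mp hE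
      exact Finset.mem_powerset.mp (hD i)) (by simp [hV1])
  rw [Multiset.map_map] at h
  change ChowCube.vert u * ∏ i, ChowCube.layer V1 (D i) = 0 at h
  rw [Finset.prod_smul, mul_smul_comm, smul_mul_assoc, mul_comm, h, smul_zero,
    smul_zero]
end
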